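/- arXiv:2208.11938 — 7 statements merged into one kernel-verified Lean document; each statement's English description precedes it below -/
import Mathlib

section
/- Let V be a nonzero finite-dimensional complex vector space and W a finite subgroup of GL(V) generated by its reflections, such that every reflection in W has order 2 and V is an irreducible W-module (the only W-invariant subspaces of V are 0 and V). Let R be the set of reflections of W, let W₀ ⊊ W be a proper parabolic subgroup of W, and let R₀ = R ∩ W₀. Then W is generated by R \ R₀. -/
open Module

/-- A reflection: a nontrivial invertible linear endomorphism whose fixed subspace
`Ker(w - 1)` has codimension 1. -/
def IsReflection {V : Type*} [AddCommGroup V] [Module ℂ V]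
    (w : (Module.End ℂ V)ˣ) : Prop :=
  w ≠ 1 ∧ finrank ℂ (LinearMap.ker ((w : Module.End ℂ V) - 1)) + 1 = finrank ℂ V

/-!
Write `N` for the subgroup generated by `R \ W₀`. It is normalized by `W₀`, whose conjugation
action preserves both `R` and `W₀`, and by its own generators, hence by all of `W`. An element
of `R` outside `N` then has every conjugate outside `N`, hence in `W₀`, so it lies in the normal
core of `W₀`. This core is trivial: the vectors it fixes form a `W`-invariant subspace containing
the one whose pointwise stabilizer is `W₀`, which is nonzero because `W₀ ≠ W`; by irreducibility
the core fixes all of `V`.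
-/

section ConjugationStableGenerators

variable {G : Type*} [Group G] {S : Set G}

theorem normal_closure_sdiff {H : Subgroup G} (hconj : ∀ h ∈ H, ∀ s ∈ S, h * s * h⁻¹ ∈ S)
    (hgen : Subgroup.closure S = ⊤) :
    (Subgroup.closure (S \ H)).Normal := by
  have hH : H ≤ Subgroup.normalizer (Subgroup.closure (S \ H)) :=
    Subgroup.le_normalizer_closure_iff.mpr fun h hh s hs =>
      Subgroup.subset_closure ⟨hconj h hh s hs.1, fun hmem => hs.2 <|
        (H.mul_mem_cancel_left hh).mp ((H.mul_mem_cancel_right (H.inv_mem hh)).mp hmem)⟩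
  rw [← Subgroup.normalizer_eq_top_iff, eq_top_iff, ← hgen, Subgroup.closure_le]
  intro s hs
  by_cases hsH : s ∈ H
  · exact hH hsH
  · exact Subgroup.le_normalizer (Subgroup.subset_closure ⟨hs, hsH⟩)

theorem closure_sdiff_sup_normalCore (hconj : ∀ g, ∀ s ∈ S, g * s * g⁻¹ ∈ S)
    (hgen : Subgroup.closure S = ⊤) (H : Subgroup G) :
    Subgroup.closure (S \ H) ⊔ H.normalCore = ⊤ := by
  have hnormal := normal_closure_sdiff (H := H) (fun h _ => hconj h) hgen
  rw [eq_top_iff, ← hgen, Subgroup.closure_le]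
  intro s hs
  by_cases hsN : s ∈ Subgroup.closure (S \ H)
  · exact Subgroup.mem_sup_left hsN
  · refine Subgroup.mem_sup_right fun g => ?_
    by_contra hgs
    have hconj_mem := Subgroup.subset_closure
      (show g * s * g⁻¹ ∈ S \ H from ⟨hconj g s hs, hgs⟩)
    exact hsN (by simpa [mul_assoc] using hnormal.conj_mem' _ hconj_mem g)

end ConjugationStableGenerators

theorem closure_preimage_coe_eq_top_iff {G : Type*} [Group G] {H : Subgroup G} {S : Set G}
    (hS : S ⊆ H) :
    Subgroup.closure ((↑) ⁻¹' S : Set H) = ⊤ ↔ Subgroup.closure S = H := by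
  rw [← (Subgroup.map_injective H.subtype_injective).eq_iff, MonoidHom.map_closure,
    ← MonoidHom.range_eq_map, H.range_subtype, H.coe_subtype,
    Set.image_preimage_eq_of_subset (by simpa using hS)]

section IrreducibleAction

variable {K V G : Type*} [Semiring K] [AddCommMonoid V] [Module K V] [Group G]
  [DistribMulAction G V] [SMulCommClass G K V]

variable (K V) in
/-- The submodule `V ^ N` of vectors fixed by every element of the subgroup `N` of `G`. -/
def fixedPointsSubmodule (N : Subgroup G) : Submodule K V where
  __ := FixedPoints.addSubmonoid N V
  smul_mem' c v hv n := by rw [smul_comm, hv n]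

theorem normalCore_fixingSubgroup_eq_bot [FaithfulSMul G V]
    (hirr : ∀ U : Submodule K V, (∀ g : G, ∀ v ∈ U, g • v ∈ U) → U = ⊥ ∨ U = ⊤)
    {U : Submodule K V} (hU : U ≠ ⊥) :
    (fixingSubgroup G (U : Set V)).normalCore = ⊥ := by
  set N := (fixingSubgroup G (U : Set V)).normalCore
  have hUN : U ≤ fixedPointsSubmodule K V N := fun v hv n =>
    (mem_fixingSubgroup_iff G).mp (Subgroup.normalCore_le _ n.2) v hv
  have hN : fixedPointsSubmodule K V N = ⊤ :=
    (hirr _ fun g _ hv => smul_mem_fixedPoints_of_normal g hv).resolve_left fun hbot =>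
      hU (le_bot_iff.mp (hbot ▸ hUN))
  refine (Subgroup.eq_bot_iff_forall N).mpr fun n hn => eq_of_smul_eq_smul fun v : V => ?_
  have hv : v ∈ fixedPointsSubmodule K V N := hN ▸ Submodule.mem_top
  rw [one_smul]
  exact hv ⟨n, hn⟩

theorem closure_sdiff_fixingSubgroup_eq_top [FaithfulSMul G V]
    (hirr : ∀ U : Submodule K V, (∀ g : G, ∀ v ∈ U, g • v ∈ U) → U = ⊥ ∨ U = ⊤)
    {S : Set G} (hconj : ∀ g, ∀ s ∈ S, g * s * g⁻¹ ∈ S) (hgen : Subgroup.closure S = ⊤)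
    {U : Submodule K V} (hU : fixingSubgroup G (U : Set V) ≠ ⊤) :
    Subgroup.closure (S \ fixingSubgroup G (U : Set V)) = ⊤ := by
  have hU_ne_bot : U ≠ ⊥ := by
    rintro rfl
    exact hU (eq_top_iff.mpr fun g _ => by simp [mem_fixingSubgroup_iff])
  have hsup := closure_sdiff_sup_normalCore hconj hgen (fixingSubgroup G (U : Set V))
  rwa [normalCore_fixingSubgroup_eq_bot hirr hU_ne_bot, sup_bot_eq] at hsup

end IrreducibleAction

theorem ker_linearEquiv_conj {K V V' : Type*} [CommSemiring K] [AddCommMonoid V] [Module K V]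
    [AddCommMonoid V'] [Module K V'] (e : V ≃ₗ[K] V') (f : Module.End K V) :
    LinearMap.ker (e.conj f) = (LinearMap.ker f).map (e : V →ₗ[K] V') := by
  rw [LinearEquiv.conj_apply, LinearMap.comp_assoc, LinearEquiv.ker_comp, LinearMap.ker_comp,
    Submodule.map_equiv_eq_comap_symm]

theorem IsReflection.conj {V : Type*} [AddCommGroup V] [Module ℂ V]
    {w : (Module.End ℂ V)ˣ} (hw : IsReflection w) (g : (Module.End ℂ V)ˣ) :
    IsReflection (g * w * g⁻¹) := by
  refine ⟨fun h => hw.1 (conj_eq_one_iff.mp h), ?_⟩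
  let e := LinearMap.GeneralLinearGroup.generalLinearEquiv ℂ V g
  have hconj : ((g * w * g⁻¹ : (Module.End ℂ V)ˣ) : Module.End ℂ V) - 1 =
      e.conj ((w : Module.End ℂ V) - 1) := by
    rw [map_sub, Module.End.one_eq_id, LinearEquiv.conj_id]
    rfl
  rw [hconj, ker_linearEquiv_conj, LinearEquiv.finrank_map_eq, hw.2]

theorem reflection_group_generated_by_complement_of_parabolic_general
    {K V : Type*} [Semiring K] [AddCommMonoid V] [Module K V]
    {W W₀ : Subgroup (Module.End K V)ˣ} {R : Set (Module.End K V)ˣ}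
    (hconj : ∀ w ∈ W, ∀ r ∈ R, w * r * w⁻¹ ∈ R)
    (hgen : Subgroup.closure R = W)
    (hirr : ∀ U : Submodule K V,
      (∀ w ∈ W, ∀ v ∈ U, (w : Module.End K V) v ∈ U) → U = ⊥ ∨ U = ⊤)
    (hpar : ∃ U : Submodule K V, ∀ w : (Module.End K V)ˣ,
      w ∈ W₀ ↔ w ∈ W ∧ ∀ v ∈ U, (w : Module.End K V) v = v)
    (hproper : W₀ < W) :
    Subgroup.closure (R \ W₀) = W := by
  obtain ⟨U, hU⟩ := hpar
  have hRW : R ⊆ W := hgen ▸ Subgroup.subset_closure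
  have hW₀ : W₀.subgroupOf W = fixingSubgroup W (U : Set V) := by
    ext w
    simp only [Subgroup.mem_subgroupOf, hU, w.2, true_and, mem_fixingSubgroup_iff]
    rfl
  have hne : fixingSubgroup W (U : Set V) ≠ ⊤ := fun h =>
    hproper.not_ge (Subgroup.subgroupOf_eq_top.mp (hW₀.trans h))
  rw [← closure_preimage_coe_eq_top_iff (Set.sdiff_subset.trans hRW), Set.preimage_sdiff,
    ← W.coe_subtype, ← Subgroup.coe_subgroupOf, hW₀]
  exact closure_sdiff_fixingSubgroup_eq_top (G := W)
    (fun X hX => hirr X fun w hw => hX ⟨w, hw⟩) (fun w r hr => hconj w w.2 r hr)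
    ((closure_preimage_coe_eq_top_iff hRW).mpr hgen) hne

/-- an irreducible complex 2-reflection group is generated by the
reflections lying outside any proper parabolic subgroup. -/
theorem reflection_group_generated_by_complement_of_parabolic
    {V : Type*} [AddCommGroup V] [Module ℂ V] [FiniteDimensional ℂ V] [Nontrivial V]
    (W W₀ : Subgroup (Module.End ℂ V)ˣ)
    (hWfin : (W : Set (Module.End ℂ V)ˣ).Finite)
    (R R₀ : Set (Module.End ℂ V)ˣ)
    (hR : R = {w : (Module.End ℂ V)ˣ | w ∈ W ∧ IsReflection w})
    (hgen : Subgroup.closure R = W)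
    (horder : ∀ w ∈ R, w * w = 1)
    (hirr : ∀ U : Submodule ℂ V,
      (∀ w ∈ W, ∀ v ∈ U, (w : Module.End ℂ V) v ∈ U) → U = ⊥ ∨ U = ⊤)
    (hpar : ∃ U : Submodule ℂ V, ∀ w : (Module.End ℂ V)ˣ,
      w ∈ W₀ ↔ w ∈ W ∧ ∀ v ∈ U, (w : Module.End ℂ V) v = v)
    (hproper : W₀ < W)
    (hR₀ : R₀ = R ∩ (W₀ : Set (Module.End ℂ V)ˣ)) :
    Subgroup.closure (R \ R₀) = W := by
  subst hR hR₀
  rw [Set.sdiff_self_inter]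
  exact reflection_group_generated_by_complement_of_parabolic_general
    (fun w hw r hr => ⟨W.mul_mem (W.mul_mem hw hr.1) (W.inv_mem hw), hr.2.conj w⟩)
    hgen hirr hpar hproper
end

section
/- Let V be a finite-dimensional complex vector space and W a finite subgroup of GL(V) generated by its reflections, all of which have order 2. Let W₁, W₂ be parabolic subgroups of W, let Rᵢ be the set of reflections of W lying in Wᵢ, and let uᵢ = Σ_{s ∈ Rᵢ} s in the group ring ℤ[W] (i = 1, 2). Then u₁u₂ = u₂u₁ if and only if s₁s₂ = s₂s₁ for every s₁ ∈ R₁ \ R₂ and every s₂ ∈ R₂ \ R₁. -/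
open Module

/-!
Let `c` be the sum of the common reflections and write `uᵢ = c + aᵢ`. Each `Rᵢ` is stable under
conjugation by its own elements, so `c` commutes with both `uᵢ` and the question is whether `a₁`
and `a₂` commute. If they do, comparing supports gives, for `s ∈ R₁ \ R₂` and `t ∈ R₂ \ R₁`, a
relation `s * t = t' * s'` with factors from the same sets, that is, `(s * t' * s⁻¹) * t = s * s'`.

Two distinct reflections of order two with the same root line have a product of infinite order, so
if the product of two distinct reflections has finite order, it fixes only the vectors fixed by
both. The order of `s * s'` is finite because `R₁` is. If `s ≠ s'`, then `t` fixes everything that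
`s` and `s'` fix, so `t ∈ R₁`, a contradiction. Thus `s = s'`, symmetrically `t = t'`, and
`s * t = t * s`.
-/

open scoped Pointwise

section Group

variable {G : Type*} [Group G]

/-- A set of group elements that is stable under conjugation by its own elements, such as the set of
reflections of a reflection group. It need not be stable under conjugation by other elements. -/
def IsConjClosed (X : Set G) : Prop :=
  ∀ g ∈ X, ∀ s ∈ X, g * s * g⁻¹ ∈ X

lemma IsConjClosed.inter_subgroup {X : Set G} (hX : IsConjClosed X) (H : Subgroup G) :
    IsConjClosed (X ∩ H) := fun g hg s hs =>
  ⟨hX g hg.1 s hs.1, H.mul_mem (H.mul_mem hg.2 hs.2) (H.inv_mem hg.2)⟩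

lemma IsConjClosed.isOfFinOrder_mul {X : Set G} (hX : IsConjClosed X) (hfin : X.Finite) {s t : G}
    (hs : s ∈ X) (ht : t ∈ X) (hs2 : s * s = 1) (ht2 : t * t = 1) : IsOfFinOrder (s * t) := by
  have hsinv : s⁻¹ = s := inv_eq_of_mul_eq_one_left hs2
  have htinv : t⁻¹ = t := inv_eq_of_mul_eq_one_left ht2
  have hinvert : ∀ n : ℕ, s * (s * t) ^ n * s⁻¹ = ((s * t) ^ n)⁻¹ := fun n => by
    rw [← conj_pow, ← inv_pow, mul_inv_rev, htinv, hsinv, ← mul_assoc, hs2, one_mul]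
  have hmem : ∀ n : ℕ, (s * t) ^ n * s * ((s * t) ^ n)⁻¹ ∈ X := fun n => by
    induction n with
    | zero => simpa using hs
    | succ n ih => simpa [pow_succ', mul_assoc] using hX s hs _ (hX t ht _ ih)
  have hconj : ∀ n : ℕ, (s * t) ^ n * s * ((s * t) ^ n)⁻¹ = (s * t) ^ (n + n) * s := fun n => by
    rw [← hinvert, hsinv, pow_add]
    simp only [mul_assoc, mul_left_cancel_iff]
    rw [← mul_assoc s s, hs2, one_mul]
  by_contra hinf
  have hpow := injective_pow_iff_not_isOfFinOrder.mpr hinf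
  refine Set.infinite_of_injective_forall_mem (fun m n hmn => ?_) hmem hfin
  simp only [hconj, mul_left_inj] at hmn
  have := hpow hmn
  omega

lemma inter_eq_inter_fixingSubgroup {α : Type*} [MulAction G α] {W W' : Subgroup G} {R : Set G}
    (hRW : R ⊆ W) {U : Set α} (hU : ∀ w, w ∈ W' ↔ w ∈ W ∧ ∀ v ∈ U, w • v = v) :
    R ∩ W' = R ∩ fixingSubgroup G U := by
  ext w
  exact and_congr_right fun hw =>
    (hU w).trans <| (and_iff_right (hRW hw)).trans (mem_fixingSubgroup_iff G).symm

end Group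

section GroupAlgebra

open MonoidAlgebra

lemma support_coeff_sum_of_mul_sum_of (k : Type*) {G : Type*} [Semiring k] [CharZero k] [Monoid G]
    [DecidableEq G] (A B : Finset G) :
    ((∑ s ∈ A, of k G s) * ∑ t ∈ B, of k G t).coeff.support = A * B := by
  have hcoeff : ∀ x, ((∑ s ∈ A, of k G s) * ∑ t ∈ B, of k G t).coeff x =
      ({p ∈ A ×ˢ B | p.1 * p.2 = x} : Finset (G × G)).card := fun x => by
    simp only [Finset.sum_mul_sum, ← Finset.sum_product', of_apply, single_mul_single, mul_one,
      coeff_sum, Finsupp.finsetSum_apply, coeff_single, Finsupp.single_apply, Finset.sum_boole]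
  ext x
  simp only [Finsupp.mem_support_iff, hcoeff, Nat.cast_ne_zero, Finset.card_ne_zero,
    Finset.Nonempty, Finset.mem_filter, Finset.mem_product, Finset.mem_mul, Prod.exists]
  grind

variable {k G : Type*} [Group G]

lemma commute_of_sum_of_of_conj_mem [Semiring k] {A : Finset G} {g : G}
    (h : ∀ s ∈ A, g * s * g⁻¹ ∈ A) : Commute (of k G g) (∑ s ∈ A, of k G s) := by
  have hmap : A.map (MulAut.conj g).toEquiv.toEmbedding = A :=
    Finset.map_eq_of_subset fun x hx => by
      obtain ⟨s, hs, rfl⟩ := Finset.mem_map.mp hx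
      exact h s hs
  calc of k G g * ∑ s ∈ A, of k G s
      = (∑ s ∈ A, of k G (g * s * g⁻¹)) * of k G g := by
        simp only [Finset.mul_sum, Finset.sum_mul, ← map_mul, inv_mul_cancel_right]
    _ = (∑ s ∈ A.map (MulAut.conj g).toEquiv.toEmbedding, of k G s) * of k G g := by
        rw [Finset.sum_map]; rfl
    _ = (∑ s ∈ A, of k G s) * of k G g := by rw [hmap]

lemma IsConjClosed.commute_sum_of_subset [Semiring k] {A C : Finset G}
    (hA : IsConjClosed (A : Set G)) (hCA : C ⊆ A) :
    Commute (∑ s ∈ C, of k G s) (∑ s ∈ A, of k G s) :=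
  Commute.sum_left _ _ _ fun g hg => commute_of_sum_of_of_conj_mem fun s hs => hA g (hCA hg) s hs

lemma commute_add_add_iff_of_commute {S : Type*} [Ring S] {a b c : S} (ha : Commute c a)
    (hb : Commute c b) : Commute (c + a) (c + b) ↔ Commute a b := by
  have hcb : Commute c (c + b) := (Commute.refl c).add_right hb
  refine ⟨fun h => ?_, fun h => hcb.add_left (ha.symm.add_right h)⟩
  have hab : Commute a (c + b) := by simpa using h.sub_left hcb
  simpa using hab.sub_right ha.symm

lemma IsConjClosed.commute_sum_of_iff_commute_sum_sdiff [Ring k] [DecidableEq G] {A B : Finset G}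
    (hA : IsConjClosed (A : Set G)) (hB : IsConjClosed (B : Set G)) :
    Commute (∑ s ∈ A, of k G s) (∑ t ∈ B, of k G t) ↔
      Commute (∑ s ∈ A \ B, of k G s) (∑ t ∈ B \ A, of k G t) := by
  have hcA := hA.commute_sum_of_subset (k := k) (Finset.inter_subset_left (s₂ := B))
  have hcB := hB.commute_sum_of_subset (k := k) (Finset.inter_subset_right (s₁ := A))
  have hsumA := Finset.sum_inter_add_sum_sdiff A B (of k G)
  have hsumB := Finset.sum_inter_add_sum_sdiff B A (of k G)
  rw [Finset.inter_comm] at hsumB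
  rw [← hsumA] at hcA ⊢
  rw [← hsumB] at hcB ⊢
  refine commute_add_add_iff_of_commute ?_ ?_
  · simpa using hcA.sub_right (Commute.refl _)
  · simpa using hcB.sub_right (Commute.refl _)

lemma commute_sum_of_iff_of_mul_eq_mul_imp [Semiring k] [CharZero k] {A B : Finset G}
    (h : ∀ s ∈ A, ∀ s' ∈ A, ∀ t ∈ B, ∀ t' ∈ B, s * t = t' * s' → s = s' ∧ t = t') :
    Commute (∑ s ∈ A, of k G s) (∑ t ∈ B, of k G t) ↔ ∀ s ∈ A, ∀ t ∈ B, s * t = t * s := by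
  classical
  refine ⟨fun hcomm s hs t ht => ?_, fun hcomm => Commute.sum_left _ _ _ fun s hs =>
    Commute.sum_right _ _ _ fun t ht => Commute.map (hcomm s hs t ht) (of k G)⟩
  have hAB : A * B = B * A := by
    rw [← support_coeff_sum_of_mul_sum_of k, hcomm.eq, support_coeff_sum_of_mul_sum_of]
  obtain ⟨t', ht', s', hs', hmul⟩ := Finset.mem_mul.mp (hAB ▸ Finset.mul_mem_mul hs ht)
  obtain ⟨rfl, rfl⟩ := h s hs s' hs' t ht t' ht' hmul.symm
  exact hmul.symm

end GroupAlgebra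

section Reflection

variable {K V : Type*} [AddCommGroup V]

lemma smul_eq_neg_of_mem_range_sub_one [Ring K] [Module K V] {s : (Module.End K V)ˣ}
    (hs : s * s = 1) {y : V} (hy : y ∈ LinearMap.range ((s : Module.End K V) - 1)) :
    s • y = -y := by
  obtain ⟨x, rfl⟩ := hy
  change s • (s • x - x) = -(s • x - x)
  rw [smul_sub, smul_smul, hs, one_smul, neg_sub]

lemma eq_of_range_sub_one_eq [Ring K] [Module K V] [IsAddTorsionFree V] {s t : (Module.End K V)ˣ}
    (hs : s * s = 1) (ht : t * t = 1) (hfin : IsOfFinOrder (s * t))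
    (hrange : LinearMap.range ((s : Module.End K V) - 1) =
      LinearMap.range ((t : Module.End K V) - 1)) : s = t := by
  ext x
  change s • x = t • x
  set y := s • x - t • x with hy
  have hys : y ∈ LinearMap.range ((s : Module.End K V) - 1) := by
    rw [hy, ← sub_sub_sub_cancel_right _ _ x]
    exact Submodule.sub_mem _ ⟨x, rfl⟩ (hrange ▸ ⟨x, rfl⟩)
  have hsy : s • y = -y := smul_eq_neg_of_mem_range_sub_one hs hys
  have hty : t • y = -y := smul_eq_neg_of_mem_range_sub_one ht (hrange ▸ hys)
  have hstx : (s * t) • x = x + y := by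
    have htx : t • x = s • x - y := by rw [hy, sub_sub_cancel]
    rw [mul_smul, htx, smul_sub, smul_smul, hs, one_smul, hsy, sub_neg_eq_add]
  have hsty : (s * t) • y = y := by rw [mul_smul, hty, smul_neg, hsy, neg_neg]
  have hiter : ∀ n : ℕ, (s * t) ^ n • x = x + n • y := fun n => by
    induction n with
    | zero => simp
    | succ n ih =>
      rw [pow_succ', mul_smul, ih, smul_add, smul_comm (s * t) n y, hstx, hsty, succ_nsmul',
        add_assoc]
  obtain ⟨n, hn, hpow⟩ := isOfFinOrder_iff_pow_eq_one.mp hfin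
  have hny : n • y = 0 := by simpa [hpow] using hiter n
  exact sub_eq_zero.mp ((nsmul_eq_zero_iff_right hn.ne').mp hny)

variable [DivisionRing K] [Module K V]

/-- A reflection of order two, described by its root line, the range of `s - 1`, rather than by its
hyperplane, so that the notion makes sense in infinite dimension. In characteristic two these are
the transvections. -/
def IsInvolutiveReflection (s : (Module.End K V)ˣ) : Prop :=
  s * s = 1 ∧ finrank K (LinearMap.range ((s : Module.End K V) - 1)) = 1

namespace IsInvolutiveReflection

variable {s t : (Module.End K V)ˣ}

lemma inv_eq (hs : IsInvolutiveReflection s) : s⁻¹ = s :=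
  inv_eq_of_mul_eq_one_left hs.1

lemma isAtom_range (hs : IsInvolutiveReflection s) :
    IsAtom (LinearMap.range ((s : Module.End K V) - 1)) :=
  isSimpleModule_iff_isAtom.mp (isSimpleModule_iff_finrank_eq_one.mpr hs.2)

lemma ne_one (hs : IsInvolutiveReflection s) : s ≠ 1 := by
  rintro rfl
  exact hs.isAtom_range.1 (by simp)

lemma conj (hs : IsInvolutiveReflection s) (g : (Module.End K V)ˣ) :
    IsInvolutiveReflection (g * s * g⁻¹) := by
  refine ⟨by rw [conj_mul, hs.1, mul_one, mul_inv_cancel], ?_⟩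
  have hrange : LinearMap.range (((g * s * g⁻¹ : (Module.End K V)ˣ) : Module.End K V) - 1) =
      (LinearMap.range ((s : Module.End K V) - 1)).map (g : Module.End K V) := by
    have hsurj : LinearMap.range ((g⁻¹ : (Module.End K V)ˣ) : Module.End K V) = ⊤ :=
      LinearMap.range_eq_top.mpr (MulAction.surjective g⁻¹)
    have hfactor : ((g * s * g⁻¹ : (Module.End K V)ˣ) : Module.End K V) - 1 =
        ((g : Module.End K V) * ((s : Module.End K V) - 1)) * (g⁻¹ : (Module.End K V)ˣ) := by
      simp [mul_sub, sub_mul]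
    rw [hfactor, Module.End.mul_eq_comp, LinearMap.range_comp_of_range_eq_top _ hsurj,
      Module.End.mul_eq_comp, LinearMap.range_comp]
  rw [hrange, ← hs.2]
  exact (Submodule.equivMapOfInjective _ (MulAction.injective g) _).finrank_eq.symm

lemma smul_eq_self_of_mul_smul_eq_self [IsAddTorsionFree V] (hs : IsInvolutiveReflection s)
    (ht : IsInvolutiveReflection t) (hne : s ≠ t) (hfin : IsOfFinOrder (s * t)) {v : V}
    (hv : (s * t) • v = v) : t • v = v := by
  have hst : s • v = t • v := by
    nth_rw 1 [← hv]
    rw [smul_smul, ← mul_assoc, hs.1, one_mul]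
  have hrange : LinearMap.range ((s : Module.End K V) - 1) ≠
      LinearMap.range ((t : Module.End K V) - 1) :=
    fun h => hne (eq_of_range_sub_one_eq hs.1 ht.1 hfin h)
  have hdisj := hs.isAtom_range.disjoint_of_ne ht.isAtom_range hrange
  exact sub_eq_zero.mp (Submodule.disjoint_def.mp hdisj _ ⟨v, congrArg (· - v) hst⟩ ⟨v, rfl⟩)

end IsInvolutiveReflection

variable {R : Set (Module.End K V)ˣ}

lemma eq_of_mul_eq_mul_of_notMem_fixingSubgroup [IsAddTorsionFree V]
    (hR : ∀ s ∈ R, IsInvolutiveReflection s) (hconj : IsConjClosed R) {U : Set V}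
    (hfin : (R ∩ fixingSubgroup (Module.End K V)ˣ U).Finite) {s s' t t' : (Module.End K V)ˣ}
    (hs : s ∈ R ∩ fixingSubgroup (Module.End K V)ˣ U)
    (hs' : s' ∈ R ∩ fixingSubgroup (Module.End K V)ˣ U) (ht : t ∈ R) (ht' : t' ∈ R)
    (htU : t ∉ fixingSubgroup (Module.End K V)ˣ U) (hmul : s * t = t' * s') : s = s' := by
  have hsinv : s⁻¹ = s := (hR s hs.1).inv_eq
  have hprod : s * t' * s⁻¹ * t = s * s' := by
    rw [hsinv, mul_assoc (s * t'), hmul, mul_assoc s, ← mul_assoc t', (hR t' ht').1, one_mul]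
  have hfinOrder : IsOfFinOrder (s * s') :=
    (hconj.inter_subgroup _).isOfFinOrder_mul hfin hs hs' (hR s hs.1).1 (hR s' hs'.1).1
  by_contra hne
  have hne' : s * t' * s⁻¹ ≠ t := fun h => hne <| by
    rw [h, (hR t ht).1] at hprod
    rw [eq_inv_of_mul_eq_one_right hprod.symm, hsinv]
  refine htU ((mem_fixingSubgroup_iff _).mpr fun v hv => ?_)
  refine (hR _ (hconj s hs.1 t' ht')).smul_eq_self_of_mul_smul_eq_self (hR t ht) hne'
    (hprod ▸ hfinOrder) ?_
  rw [hprod]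
  exact (mem_fixingSubgroup_iff _).mp (mul_mem hs.2 hs'.2) v hv

theorem sums_of_reflections_commute_iff_general {k : Type*} [Ring k] [CharZero k] [CharZero K]
    (hR : ∀ s ∈ R, IsInvolutiveReflection s) (hconj : IsConjClosed R) {U₁ U₂ : Set V}
    {R₁ R₂ : Set (Module.End K V)ˣ} (hR₁ : R₁ = R ∩ fixingSubgroup (Module.End K V)ˣ U₁)
    (hR₂ : R₂ = R ∩ fixingSubgroup (Module.End K V)ˣ U₂) (hfin₁ : R₁.Finite) (hfin₂ : R₂.Finite) :
    Commute (∑ s ∈ hfin₁.toFinset, MonoidAlgebra.of k (Module.End K V)ˣ s)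
      (∑ s ∈ hfin₂.toFinset, MonoidAlgebra.of k (Module.End K V)ˣ s) ↔
      ∀ s₁ ∈ R₁ \ R₂, ∀ s₂ ∈ R₂ \ R₁, s₁ * s₂ = s₂ * s₁ := by
  classical
  have : IsAddTorsionFree V := .of_isTorsionFree K V
  subst hR₁ hR₂
  rw [IsConjClosed.commute_sum_of_iff_commute_sum_sdiff
      (by simpa using hconj.inter_subgroup _) (by simpa using hconj.inter_subgroup _),
    commute_sum_of_iff_of_mul_eq_mul_imp]
  · simp only [Finset.mem_sdiff, Set.Finite.mem_toFinset, Set.mem_sdiff]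
  · simp only [Finset.mem_sdiff, Set.Finite.mem_toFinset]
    intro s hs s' hs' t ht t' ht' hmul
    have hmul_inv : t * s = s' * t' := by
      simpa only [mul_inv_rev, (hR _ hs.1.1).inv_eq, (hR _ hs'.1.1).inv_eq, (hR _ ht.1.1).inv_eq,
        (hR _ ht'.1.1).inv_eq] using congrArg (·⁻¹) hmul
    exact ⟨eq_of_mul_eq_mul_of_notMem_fixingSubgroup hR hconj hfin₁ hs.1 hs'.1 ht.1.1 ht'.1.1
        (fun h => ht.2 ⟨ht.1.1, h⟩) hmul,
      eq_of_mul_eq_mul_of_notMem_fixingSubgroup hR hconj hfin₂ ht.1 ht'.1 hs.1.1 hs'.1.1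
        (fun h => hs.2 ⟨hs.1.1, h⟩) hmul_inv⟩

end Reflection

lemma isInvolutiveReflection_iff {V : Type*} [AddCommGroup V] [Module ℂ V]
    [FiniteDimensional ℂ V] {w : (Module.End ℂ V)ˣ} :
    IsInvolutiveReflection w ↔ w * w = 1 ∧ IsReflection w := by
  have hrank := LinearMap.finrank_range_add_finrank_ker ((w : Module.End ℂ V) - 1)
  refine ⟨fun h => ⟨h.1, h.ne_one, ?_⟩, fun h => ⟨h.1, ?_⟩⟩
  · have := h.2
    omega
  · have := h.2.2
    omega

/-- for two parabolic subgroups `W₁, W₂` of a finite complex 2-reflection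
group `W`, the sums of reflections `u₁, u₂ ∈ ℤ[W]` commute if and only if every
reflection of `R₁ \ R₂` commutes with every reflection of `R₂ \ R₁`. -/
theorem sums_of_reflections_commute_iff
    {V : Type*} [AddCommGroup V] [Module ℂ V] [FiniteDimensional ℂ V]
    (W W₁ W₂ : Subgroup (Module.End ℂ V)ˣ)
    (hWfin : (W : Set (Module.End ℂ V)ˣ).Finite)
    (R : Set (Module.End ℂ V)ˣ)
    (hR : R = {w : (Module.End ℂ V)ˣ | w ∈ W ∧ IsReflection w})
    (hgen : Subgroup.closure R = W)
    (horder : ∀ w ∈ R, w * w = 1)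
    (R₁ R₂ : Set (Module.End ℂ V)ˣ)
    (hR₁ : R₁ = R ∩ (W₁ : Set (Module.End ℂ V)ˣ))
    (hR₂ : R₂ = R ∩ (W₂ : Set (Module.End ℂ V)ˣ))
    (hpar₁ : ∃ U : Submodule ℂ V, ∀ w : (Module.End ℂ V)ˣ,
      w ∈ W₁ ↔ w ∈ W ∧ ∀ v ∈ U, (w : Module.End ℂ V) v = v)
    (hpar₂ : ∃ U : Submodule ℂ V, ∀ w : (Module.End ℂ V)ˣ,
      w ∈ W₂ ↔ w ∈ W ∧ ∀ v ∈ U, (w : Module.End ℂ V) v = v)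
    (hStein₁ : ∀ w : (Module.End ℂ V)ˣ, w ∈ W₁ ↔ w ∈ W ∧
      ∀ v ∈ ⨅ s ∈ R₁, LinearMap.ker ((s : Module.End ℂ V) - 1),
        (w : Module.End ℂ V) v = v)
    (hStein₂ : ∀ w : (Module.End ℂ V)ˣ, w ∈ W₂ ↔ w ∈ W ∧
      ∀ v ∈ ⨅ s ∈ R₂, LinearMap.ker ((s : Module.End ℂ V) - 1),
        (w : Module.End ℂ V) v = v)
    (hfin₁ : R₁.Finite) (hfin₂ : R₂.Finite)
    (u₁ u₂ : MonoidAlgebra ℤ (Module.End ℂ V)ˣ)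
    (hu₁ : u₁ = ∑ s ∈ hfin₁.toFinset, MonoidAlgebra.of ℤ (Module.End ℂ V)ˣ s)
    (hu₂ : u₂ = ∑ s ∈ hfin₂.toFinset, MonoidAlgebra.of ℤ (Module.End ℂ V)ˣ s) :
    u₁ * u₂ = u₂ * u₁ ↔
      ∀ s₁ ∈ R₁ \ R₂, ∀ s₂ ∈ R₂ \ R₁, s₁ * s₂ = s₂ * s₁ := by
  have hRW : R ⊆ W := fun _ hw => (hR.subset hw).1
  have hrefl : ∀ s ∈ R, IsInvolutiveReflection s := fun s hs =>
    isInvolutiveReflection_iff.mpr ⟨horder s hs, (hR.subset hs).2⟩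
  have hconj : IsConjClosed R := fun g hg s hs => hR.superset
    ⟨W.mul_mem (W.mul_mem (hRW hg) (hRW hs)) (W.inv_mem (hRW hg)),
      (isInvolutiveReflection_iff.mp ((hrefl s hs).conj g)).2⟩
  obtain ⟨U₁, hU₁⟩ := hpar₁
  obtain ⟨U₂, hU₂⟩ := hpar₂
  rw [hu₁, hu₂]
  exact sums_of_reflections_commute_iff_general hrefl hconj
    (hR₁.trans (inter_eq_inter_fixingSubgroup (U := (U₁ : Set V)) hRW hU₁))
    (hR₂.trans (inter_eq_inter_fixingSubgroup (U := (U₂ : Set V)) hRW hU₂)) hfin₁ hfin₂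
end

section
/- Let V be a finite-dimensional complex vector space and W a finite subgroup of GL(V) generated by its reflections, all of which have order 2. Let W₁, W₂ be irreducible parabolic subgroups of W with reflection sets R₁, R₂. Then the condition that s₁s₂ = s₂s₁ for every s₁ ∈ R₁ \ R₂ and every s₂ ∈ R₂ \ R₁ is equivalent to the condition: W₁ ⊆ W₂, or W₂ ⊆ W₁, or (W₁ ∩ W₂ = {1} and every element of W₁ commutes with every element of W₂). -/
/-!
The reflections of a parabolic subgroup generate it (Steinberg). To see this, consider splines on
the moment graph of the group, that is, families of polynomials indexed by the group such that the
members at `g` and `t * g` agree on the hyperplane of the reflection `t`. Induction on the degree by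
divided differences shows that the value of a spline at `v` does not change along left
multiplication by an element fixing `v`. Let `H` be generated by the reflections fixing `v`: the
product of the linear forms of the reflections outside `H`, placed on `H` and extended by zero, is a
spline that does not vanish at `v` on `H`, so every element fixing `v` lies in `H`.

Distinct commuting reflections `s`, `t` of order two are orthogonal: `s` fixes the root of `t`. If
neither of two irreducible parabolic subgroups contains the other, then `R₂ \ R₁` is stable under
conjugation by `R₁ ∩ R₂`, so its roots already span `V₂`. If `R₁ \ R₂` and `R₂ \ R₁` commute, it
follows that `R₁ \ R₂` fixes `V₂` pointwise, hence `V₁ ∩ V₂` is a proper `W₁`-invariant subspace of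
`V₁` and vanishes. Then `W₁ ∩ W₂ = 1`, so `R₁` and `R₂` are disjoint and commute.
-/

open Module

/-- A parabolic subgroup `W₀` of `W` with reflection set `R₀` is irreducible if the
subspace `V₀ = Σ_{s ∈ R₀} Im(s - 1)` is nonzero and the only `W₀`-invariant subspaces
of `V₀` are `0` and `V₀`. -/
def IsIrreducibleParabolic {V : Type*} [AddCommGroup V] [Module ℂ V]
    (W₀ : Subgroup (Module.End ℂ V)ˣ) (R₀ : Set (Module.End ℂ V)ˣ) : Prop :=
  (⨆ s ∈ R₀, LinearMap.range ((s : Module.End ℂ V) - 1)) ≠ ⊥ ∧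
  ∀ U : Submodule ℂ V, U ≤ (⨆ s ∈ R₀, LinearMap.range ((s : Module.End ℂ V) - 1)) →
    (∀ w ∈ W₀, ∀ v ∈ U, (w : Module.End ℂ V) v ∈ U) →
    U = ⊥ ∨ U = (⨆ s ∈ R₀, LinearMap.range ((s : Module.End ℂ V) - 1))

section LinearForms

open MvPolynomial

variable {k V ι : Type*} [Field k] [AddCommGroup V] [Module k V] [Fintype ι] (b : Basis ι k V)

/-- A linear form on `V`, regarded as a linear polynomial in the coordinates with respect to the
basis `b`. -/
noncomputable def linearFormPoly : Dual k V →ₗ[k] MvPolynomial ι k where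
  toFun f := ∑ i, f (b i) • X i
  map_add' f g := by simp [add_smul, Finset.sum_add_distrib]
  map_smul' c f := by simp [mul_smul, Finset.smul_sum]

lemma eval_linearFormPoly (f : Dual k V) (v : V) : eval (b.repr v) (linearFormPoly b f) = f v := by
  conv_rhs => rw [← b.sum_repr v, map_sum]
  simp [linearFormPoly, smul_eval, mul_comm]

lemma linearFormPoly_injective : Function.Injective (linearFormPoly b) := by
  intro f g h
  ext v
  rw [← eval_linearFormPoly b f, ← eval_linearFormPoly b g, h]

variable {f g : Dual k V}

lemma linearFormPoly_ne_zero (hf : f ≠ 0) : linearFormPoly b f ≠ 0 :=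
  (map_ne_zero_iff _ (linearFormPoly_injective b)).2 hf

lemma totalDegree_linearFormPoly (hf : f ≠ 0) : (linearFormPoly b f).totalDegree = 1 := by
  refine IsHomogeneous.totalDegree ?_ (linearFormPoly_ne_zero b hf)
  refine IsHomogeneous.sum _ _ _ fun i _ ↦ ?_
  rw [smul_eq_C_mul]
  simpa using (isHomogeneous_C ι (f (b i))).mul (isHomogeneous_X k i)

lemma prime_linearFormPoly (hf : f ≠ 0) : Prime (linearFormPoly b f) := by
  refine (irreducible_of_totalDegree_eq_one (totalDegree_linearFormPoly b hf) fun x hx ↦ ?_).prime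
  refine isUnit_iff_ne_zero.2 fun h0 ↦ linearFormPoly_ne_zero b hf ?_
  ext i
  simpa [h0] using hx i

lemma totalDegree_linearFormPoly_mul (hf : f ≠ 0) {r : MvPolynomial ι k} (hr : r ≠ 0) :
    (linearFormPoly b f * r).totalDegree = r.totalDegree + 1 := by
  rw [totalDegree_mul_of_isDomain (linearFormPoly_ne_zero b hf) hr,
    totalDegree_linearFormPoly b hf, add_comm]

lemma linearFormPoly_dvd_linearFormPoly_iff (hf : f ≠ 0) :
    linearFormPoly b f ∣ linearFormPoly b g ↔ ∃ c : k, g = c • f := by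
  refine ⟨fun ⟨q, hq⟩ ↦ ?_, fun ⟨c, hc⟩ ↦ ?_⟩
  · rcases eq_or_ne q 0 with rfl | hq0
    · exact ⟨0, linearFormPoly_injective b (by simpa using hq)⟩
    have hdeg := congrArg totalDegree hq
    have hg : g ≠ 0 := by
      rintro rfl
      simp [hq0, linearFormPoly_ne_zero b hf] at hq
    rw [totalDegree_linearFormPoly_mul b hf hq0, totalDegree_linearFormPoly b hg] at hdeg
    obtain ⟨c, rfl⟩ : ∃ c, q = C c := ⟨_, totalDegree_eq_zero_iff_eq_C.1 (by lia)⟩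
    exact ⟨c, linearFormPoly_injective b (by rw [map_smul, hq, smul_eq_C_mul, mul_comm])⟩
  · rw [hc, map_smul]
    exact dvd_smul_of_dvd c dvd_rfl

end LinearForms

section Reflections

variable {k V : Type*} [Field k] [AddCommGroup V] [Module k V]

/-- A reflection of order two, given by a linear form `f` and a root `a` with `f a = 2` as
`x ↦ x - f x • a`. In characteristic other than two its fixed space is the hyperplane `f = 0`. -/
def IsOrderTwoReflection (s : End k V) : Prop :=
  ∃ (f : Dual k V) (a : V), f a = 2 ∧ s = preReflection a f

variable {f g : Dual k V} {a b : V}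

lemma ne_zero_of_apply_eq_two [NeZero (2 : k)] (ha : f a = 2) : f ≠ 0 := by
  rintro rfl
  exact two_ne_zero' k (by simpa using ha.symm)

lemma preReflection_apply_eq_self_iff [NeZero (2 : k)] (ha : f a = 2) {x : V} :
    preReflection a f x = x ↔ f x = 0 := by
  have ha0 : a ≠ 0 := by
    rintro rfl
    exact two_ne_zero' k (by simpa using ha.symm)
  rw [preReflection_apply, sub_eq_self, smul_eq_zero_iff_left ha0]

lemma preReflection_smul_right (c : k) : preReflection a (c • f) = preReflection (c • a) f := by
  ext x
  simp only [preReflection_apply, LinearMap.smul_apply, smul_eq_mul]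
  module

lemma eq_smul_of_preReflection_eq [NeZero (2 : k)] (hb : g b = 2)
    (h : preReflection a f = preReflection b g) : g = (g a / 2) • f := by
  ext x
  have hx := congrArg g (LinearMap.congr_fun h x)
  simp only [preReflection_apply, map_sub, map_smul, smul_eq_mul, hb] at hx
  rw [LinearMap.smul_apply, smul_eq_mul, div_mul_eq_mul_div, eq_div_iff (two_ne_zero' k)]
  linear_combination hx

lemma apply_eq_zero_of_commute_preReflection [NeZero (2 : k)] (ha : f a = 2) (hb : g b = 2)
    (hcomm : Commute (preReflection a f) (preReflection b g))
    (hne : preReflection a f ≠ preReflection b g) : f b = 0 := by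
  have h2 := two_ne_zero' k
  by_contra hfb
  obtain ⟨c, rfl⟩ : ∃ c : k, a = c • b := by
    have h := LinearMap.congr_fun hcomm.eq b
    simp only [Module.End.mul_apply, preReflection_apply, hb, map_sub, map_smul] at h
    refine ⟨g a / 2, ?_⟩
    rw [← sub_eq_zero]
    refine (smul_eq_zero_iff_right (mul_ne_zero h2 hfb)).1 ?_
    rw [smul_sub, smul_smul, show 2 * f b * (g a / 2) = f b * g a by field_simp]
    linear_combination (norm := module) h
  rw [← preReflection_smul_right] at hcomm hne
  refine hne ?_
  congr 1
  ext x
  have h := congrArg g (LinearMap.congr_fun hcomm.eq x)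
  simp only [map_smul, smul_eq_mul] at ha
  simp only [Module.End.mul_apply, preReflection_apply, hb, map_sub, map_smul, smul_eq_mul,
    LinearMap.smul_apply] at h ⊢
  refine mul_left_cancel₀ (mul_ne_zero h2 h2) ?_
  linear_combination - h + g x * 2 * ha

lemma eq_of_apply_eq_preReflection_smul {G : Type*} [Group G] [Finite G] [CharZero k]
    {ρ : Representation k G V} (hρ : Function.Injective ρ) {s t : G} {c : k} (ha : f a = 2)
    (hb : (c • f) b = 2) (hs : ρ s = preReflection a f) (ht : ρ t = preReflection b (c • f)) :
    s = t := by
  rw [preReflection_smul_right] at ht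
  have hcb : f (c • b) = 2 := by simpa using hb
  have := IsAddTorsionFree.of_isTorsionFree k V
  have horbit (u : G) : Set.MapsTo (ρ u) (Set.range fun u ↦ ρ u (c • b))
      (Set.range fun u ↦ ρ u (c • b)) := by
    rintro _ ⟨w, rfl⟩
    exact ⟨u * w, by simp⟩
  have hab : a = c • b := eq_of_mapsTo_reflection_of_mem (Set.finite_range _) ha hcb ha hcb
    (hs ▸ horbit s) (ht ▸ horbit t) ⟨1, by simp⟩
  exact hρ (by rw [hs, ht, hab])

namespace IsOrderTwoReflection

variable {s t : End k V}

lemma mul_self_eq_one (hs : IsOrderTwoReflection s) : s * s = 1 := by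
  obtain ⟨f, a, ha, rfl⟩ := hs
  exact LinearMap.ext (involutive_preReflection ha)

variable [NeZero (2 : k)]

lemma ne_one (hs : IsOrderTwoReflection s) : s ≠ 1 := by
  obtain ⟨f, a, ha, rfl⟩ := hs
  intro h
  have hfix : f a = 0 := (preReflection_apply_eq_self_iff ha).1 (by rw [h, Module.End.one_apply])
  exact two_ne_zero' k (ha.symm.trans hfix)

lemma apply_apply_sub_of_commute (hs : IsOrderTwoReflection s) (ht : IsOrderTwoReflection t)
    (hcomm : Commute s t) (hne : s ≠ t) (x : V) : s (t x - x) = t x - x := by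
  obtain ⟨f, a, ha, rfl⟩ := hs
  obtain ⟨g, b, hb, rfl⟩ := ht
  rw [preReflection_apply_eq_self_iff ha]
  simp [preReflection_apply, apply_eq_zero_of_commute_preReflection ha hb hcomm hne]

lemma finrank_ker_sub_one_add_one [FiniteDimensional k V]
    (hs : IsOrderTwoReflection s) : finrank k (LinearMap.ker (s - 1)) + 1 = finrank k V := by
  obtain ⟨f, a, ha, rfl⟩ := hs
  have hker : LinearMap.ker (preReflection a f - 1) = LinearMap.ker f := by
    ext x
    simp [sub_eq_zero, preReflection_apply_eq_self_iff ha]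
  rw [hker, Dual.finrank_ker_add_one_of_ne_zero (ne_zero_of_apply_eq_two ha)]

end IsOrderTwoReflection

lemma isOrderTwoReflection_of_finrank_ker_sub_one_add_one [FiniteDimensional k V]
    {s : (End k V)ˣ} (hss : s * s = 1)
    (hrank : finrank k (LinearMap.ker ((s : End k V) - 1)) + 1 = finrank k V) :
    IsOrderTwoReflection (s : End k V) := by
  have hrange : finrank k (LinearMap.range ((s : End k V) - 1)) = 1 := by
    have := LinearMap.finrank_range_add_finrank_ker ((s : End k V) - 1)
    lia
  obtain ⟨f, a, hfa⟩ : LinearMap.GeneralLinearGroup.toLinearEquiv s ∈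
      LinearEquiv.dilatransvections k V := by
    rw [LinearEquiv.mem_dilatransvections_iff_finrank]
    exact hrange.le
  have hs (x : V) : (s : End k V) x = x + f x • a := by
    simpa [LinearMap.transvection.apply] using LinearMap.congr_fun hfa x
  obtain ⟨x, hx⟩ : ∃ x, f x • a ≠ 0 := by
    by_contra! h
    have hs1 : (s : End k V) - 1 = 0 := LinearMap.ext fun x ↦ by simp [hs, h]
    rw [hs1, LinearMap.range_zero, finrank_bot] at hrange
    exact zero_ne_one hrange
  have hssx : (s : End k V) ((s : End k V) x) = x :=
    LinearMap.congr_fun (congrArg Units.val hss) x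
  simp only [hs, map_add, map_smul, smul_eq_mul] at hssx
  have h0 : (2 + f a) • (f x • a) = 0 := by
    linear_combination (norm := module) hssx
  refine ⟨-f, a, ?_, LinearMap.ext fun y ↦ by simp [hs, preReflection_apply]⟩
  rw [LinearMap.neg_apply]
  linear_combination -(smul_eq_zero_iff_left hx).1 h0

end Reflections

section Dual

variable {k V G : Type*} [Field k] [AddCommGroup V] [Module k V] [Group G]
  {ρ : Representation k G V} {s : G} {f : Dual k V} {a : V}

lemma dual_apply_apply_self (g : G) : ρ.dual g f (ρ g a) = f a := by
  simp [Representation.dual_apply, Dual.transpose_apply]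

lemma apply_conj_eq_preReflection (hs : ρ s = preReflection a f) (g : G) :
    ρ (g * s * g⁻¹) = preReflection (ρ g a) (ρ.dual g f) := by
  ext x
  simp [hs, preReflection_apply, Representation.dual_apply, Dual.transpose_apply]

lemma dual_apply_eq_sub_smul (ha : f a = 2) (hs : ρ s = preReflection a f) (h : Dual k V) :
    ρ.dual s h = h - h a • f := by
  ext x
  have hinv : ρ s⁻¹ x = ρ s x := by
    rw [← ρ.self_inv_apply s x, hs, involutive_preReflection ha, ← hs, ρ.self_inv_apply s x]
  simp [Representation.dual_apply, Dual.transpose_apply, hinv, hs, preReflection_apply, mul_comm]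

end Dual

lemma apply_mul_left_eq_of_sub_mul_right_eq {G M : Type*} [Group G] [Finite G] [AddCommGroup M]
    [IsAddTorsionFree M] {T : Set G} (hT : Subgroup.closure T = ⊤) {F : G → M} {g : G}
    (hF : ∀ u, ∀ s ∈ T, F (g * u) - F (g * (u * s)) = F u - F (u * s)) (u : G) :
    F (g * u) = F u := by
  have hstep (u s : G) (hs : s ∈ T) : F (g * (u * s)) - F (u * s) = F (g * u) - F u := by
    linear_combination (norm := module) (-1 : ℤ) • hF u s hs
  have hconst (u : G) : F (g * u) - F u = F (g * 1) - F 1 := by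
    induction hT ▸ Subgroup.mem_top u using Subgroup.closure_induction_right with
    | one => rfl
    | mul_right u _ s hs ih => rw [hstep u s hs, ih]
    | mul_inv_cancel u _ s hs ih => rw [← ih, ← hstep _ s hs, inv_mul_cancel_right]
  have := Fintype.ofFinite G
  have hsum : ∑ u, (F (g * u) - F u) = 0 := by
    rw [Finset.sum_sub_distrib]
    exact sub_eq_zero.2 (Equiv.sum_comp (Equiv.mulLeft g) F)
  simp_rw [hconst, Finset.sum_const] at hsum
  rw [← sub_eq_zero, hconst]
  exact (smul_eq_zero_iff_right Finset.univ_nonempty.card_ne_zero).1 hsum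

section Splines

open MvPolynomial

variable {k V ι G : Type*} [Field k] [AddCommGroup V] [Module k V] [Fintype ι] [Group G]
  {b : Basis ι k V} {ρ : Representation k G V} {T : Set G} {φ ψ : G → MvPolynomial ι k}

/-- A spline on the moment graph of `G`: a family of polynomials indexed by `G` whose members at
`g` and `t * g` agree on the hyperplane fixed by the order-two reflection `t`, for all `t ∈ T`. -/
def IsSpline (b : Basis ι k V) (ρ : Representation k G V) (T : Set G)
    (φ : G → MvPolynomial ι k) : Prop :=
  ∀ g, ∀ t ∈ T, ∀ (f : Dual k V) (a : V), f a = 2 → ρ t = preReflection a f →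
    linearFormPoly b f ∣ φ g - φ (t * g)

lemma isSpline_indicator {H : Subgroup G} {P : MvPolynomial ι k}
    (hP : ∀ t ∈ T, t ∉ H → ∀ (f : Dual k V) (a : V), f a = 2 → ρ t = preReflection a f →
      linearFormPoly b f ∣ P) :
    IsSpline b ρ T ((H : Set G).indicator fun _ ↦ P) := by
  classical
  intro g t ht f a ha hta
  by_cases htH : t ∈ H
  · simp [Set.indicator_apply, H.mul_mem_cancel_left htH]
  · have hdvd := hP t ht htH f a ha hta
    refine dvd_sub ?_ ?_ <;> rw [Set.indicator_apply] <;> split_ifs <;> simp [hdvd]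

namespace IsSpline

variable {s : G} {f : Dual k V} {a : V}

lemma dvd_sub_mul_right (hφ : IsSpline b ρ T φ) (ha : f a = 2) (hs : ρ s = preReflection a f)
    (hsT : ∀ g, g * s * g⁻¹ ∈ T) (g : G) :
    linearFormPoly b (ρ.dual g f) ∣ φ g - φ (g * s) := by
  simpa using hφ g _ (hsT g) _ _ ((dual_apply_apply_self g).trans ha)
    (apply_conj_eq_preReflection hs g)

lemma dvd_mul_dividedDifference_sub (hφ : IsSpline b ρ T φ)
    (hψ : ∀ g, φ g - φ (g * s) = linearFormPoly b (ρ.dual g f) * ψ g)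
    {t : G} (ht : t ∈ T) {h : Dual k V} {c : V} (hc : h c = 2) (htc : ρ t = preReflection c h)
    (g : G) : linearFormPoly b h ∣ linearFormPoly b (ρ.dual g f) * (ψ g - ψ (t * g)) := by
  have hdual : ρ.dual (t * g) f = ρ.dual g f - ρ.dual g f c • h := by
    rw [map_mul, Module.End.mul_apply, dual_apply_eq_sub_smul hc htc]
  have hψt := hψ (t * g)
  rw [hdual, map_sub, map_smul, smul_eq_C_mul] at hψt
  have hsplit : linearFormPoly b (ρ.dual g f) * (ψ g - ψ (t * g)) =
      (φ g - φ (t * g)) - (φ (g * s) - φ (t * (g * s))) -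
        linearFormPoly b h * (C (ρ.dual g f c) * ψ (t * g)) := by
    rw [← mul_assoc t g s]
    linear_combination hψt - hψ g
  rw [hsplit]
  exact ((hφ g t ht h c hc htc).sub (hφ (g * s) t ht h c hc htc)).sub (Dvd.intro _ rfl)

lemma dividedDifference_mul_right_eq [NeZero (2 : k)] (hρ : Function.Injective ρ) (ha : f a = 2)
    (hs : ρ s = preReflection a f)
    (hψ : ∀ g, φ g - φ (g * s) = linearFormPoly b (ρ.dual g f) * ψ g) (g : G) :
    ψ (g * s) = ψ g := by
  have hss : s * s = 1 := hρ (by ext x; simp [hs, involutive_preReflection ha x])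
  have hdual : ρ.dual (g * s) f = -ρ.dual g f := by
    rw [map_mul, Module.End.mul_apply, dual_apply_eq_sub_smul ha hs, ha, ← map_neg]
    congr 1
    module
  have hne : ρ.dual g f ≠ 0 := ne_zero_of_apply_eq_two ((dual_apply_apply_self g).trans ha)
  have hψs := hψ (g * s)
  rw [mul_assoc, hss, mul_one, hdual, map_neg] at hψs
  refine mul_left_cancel₀ (linearFormPoly_ne_zero b hne) ?_
  linear_combination hψs + hψ g

lemma dividedDifference [CharZero k] [Finite G] (hφ : IsSpline b ρ T φ)
    (hρ : Function.Injective ρ) (ha : f a = 2) (hs : ρ s = preReflection a f)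
    (hψ : ∀ g, φ g - φ (g * s) = linearFormPoly b (ρ.dual g f) * ψ g) :
    IsSpline b ρ T ψ := by
  intro g t ht h c hc htc
  by_cases hts : t = g * s * g⁻¹
  · rw [hts, inv_mul_cancel_right, dividedDifference_mul_right_eq hρ ha hs hψ, sub_self]
    exact dvd_zero _
  · have hh := ne_zero_of_apply_eq_two hc
    refine ((prime_linearFormPoly b hh).dvd_or_dvd
      (hφ.dvd_mul_dividedDifference_sub hψ ht hc htc g)).resolve_left fun hdvd ↦ hts ?_
    obtain ⟨r, hr⟩ := (linearFormPoly_dvd_linearFormPoly_iff b hh).1 hdvd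
    refine eq_of_apply_eq_preReflection_smul hρ hc (c := r) (b := ρ g a) ?_ htc ?_
    · rw [← hr, dual_apply_apply_self, ha]
    · rw [← hr, apply_conj_eq_preReflection hs]

lemma exists_dividedDifference [CharZero k] [Finite G] (hφ : IsSpline b ρ T φ)
    (hρ : Function.Injective ρ) (ha : f a = 2) (hs : ρ s = preReflection a f)
    (hsT : ∀ g, g * s * g⁻¹ ∈ T) :
    ∃ ψ, IsSpline b ρ T ψ ∧ ∀ g, φ g - φ (g * s) = linearFormPoly b (ρ.dual g f) * ψ g := by
  choose ψ hψ using hφ.dvd_sub_mul_right ha hs hsT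
  exact ⟨ψ, hφ.dividedDifference hρ ha hs hψ, hψ⟩

theorem eval_mul_left_eq [CharZero k] [Finite G] (hφ : IsSpline b ρ T φ)
    (hρ : Function.Injective ρ) (hT : ∀ t ∈ T, IsOrderTwoReflection (ρ t))
    (hconj : ∀ t ∈ T, ∀ g, g * t * g⁻¹ ∈ T) (hgen : Subgroup.closure T = ⊤) {v : V} {g : G}
    (hg : ρ g v = v) (u : G) : eval (b.repr v) (φ (g * u)) = eval (b.repr v) (φ u) := by
  obtain ⟨d, hd⟩ : ∃ d, ∀ u, φ u ≠ 0 → (φ u).totalDegree < d := by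
    obtain ⟨d, hd⟩ := (Set.finite_range fun u ↦ (φ u).totalDegree).bddAbove
    exact ⟨d + 1, fun u _ ↦ Nat.lt_succ_of_le (hd ⟨u, rfl⟩)⟩
  induction d generalizing φ u with
  | zero => simp [fun u ↦ not_not.1 fun h ↦ Nat.not_lt_zero _ (hd u h)]
  | succ d ih =>
    refine apply_mul_left_eq_of_sub_mul_right_eq (F := fun u ↦ eval (b.repr v) (φ u)) hgen
      (fun u s hs ↦ ?_) u
    obtain ⟨f, a, ha, hsa⟩ := hT s hs
    obtain ⟨ψ, hψ, hφψ⟩ := hφ.exists_dividedDifference hρ ha hsa (hconj s hs)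
    have hψd (u : G) (hu : ψ u ≠ 0) : (ψ u).totalDegree < d := by
      have hne : ρ.dual u f ≠ 0 := ne_zero_of_apply_eq_two ((dual_apply_apply_self u).trans ha)
      have hdeg (w : G) : (φ w).totalDegree < d + 1 := by
        rcases eq_or_ne (φ w) 0 with h0 | h0
        · simp [h0]
        · exact hd w h0
      rw [← Nat.succ_lt_succ_iff, Nat.succ_eq_add_one, ← totalDegree_linearFormPoly_mul b hne hu,
        ← hφψ]
      exact (totalDegree_sub _ _).trans_lt (max_lt (hdeg _) (hdeg _))
    have hdual : ρ.dual (g * u) f v = ρ.dual u f v := by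
      conv_lhs => rw [← hg, map_mul, Module.End.mul_apply, dual_apply_apply_self]
    rw [← map_sub, ← map_sub, ← mul_assoc, hφψ, hφψ, (eval _).map_mul, (eval _).map_mul,
      eval_linearFormPoly, eval_linearFormPoly, hdual, ih hψ u hψd]

end IsSpline

end Splines

section Steinberg

variable {k V G : Type*} [Field k] [CharZero k] [AddCommGroup V] [Module k V]
  [FiniteDimensional k V] [Group G] [Finite G] {ρ : Representation k G V} {T : Set G}

theorem mem_closure_setOf_apply_eq_self (hρ : Function.Injective ρ)
    (hT : ∀ t ∈ T, IsOrderTwoReflection (ρ t)) (hconj : ∀ t ∈ T, ∀ g, g * t * g⁻¹ ∈ T)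
    (hgen : Subgroup.closure T = ⊤) {v : V} {g : G} (hg : ρ g v = v) :
    g ∈ Subgroup.closure {t ∈ T | ρ t v = v} := by
  set H := Subgroup.closure {t ∈ T | ρ t v = v}
  choose! f a ha hfa using hT
  let F := ({t ∈ T | t ∉ H}.toFinite).toFinset
  have hF {t : G} : t ∈ F ↔ t ∈ T ∧ t ∉ H := by simp [F]
  let b := Module.finBasis k V
  -- If `g ∉ H`, this spline vanishes at `g`, whereas its value at `1` does not vanish at `v`.
  have hφ : IsSpline b ρ T ((H : Set G).indicator fun _ ↦ ∏ t ∈ F, linearFormPoly b (f t)) := by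
    refine isSpline_indicator fun t ht htH h c hc htc ↦ ?_
    refine dvd_trans ?_ (Finset.dvd_prod_of_mem _ (hF.2 ⟨ht, htH⟩))
    exact (linearFormPoly_dvd_linearFormPoly_iff b (ne_zero_of_apply_eq_two hc)).2
      ⟨_, eq_smul_of_preReflection_eq (ha t ht) (htc.symm.trans (hfa t ht))⟩
  by_contra hgH
  have heval := hφ.eval_mul_left_eq hρ (fun t ht ↦ ⟨_, _, ha t ht, hfa t ht⟩) hconj hgen hg 1
  simp only [mul_one, Set.indicator_of_notMem (s := (H : Set G)) hgH, map_zero, map_prod,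
    Set.indicator_of_mem (s := (H : Set G)) H.one_mem, eval_linearFormPoly] at heval
  refine Finset.prod_ne_zero_iff.2 (fun t ht h0 ↦ ?_) heval.symm
  obtain ⟨htT, htH⟩ := hF.1 ht
  refine htH (Subgroup.subset_closure ⟨htT, ?_⟩)
  rw [hfa t htT, preReflection_apply_eq_self_iff (ha t htT), h0]

theorem mem_closure_setOf_forall_mem_apply_eq_self (hρ : Function.Injective ρ)
    (hT : ∀ t ∈ T, IsOrderTwoReflection (ρ t)) (hconj : ∀ t ∈ T, ∀ g, g * t * g⁻¹ ∈ T)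
    (hgen : Subgroup.closure T = ⊤) {E : Submodule k V} {g : G} (hg : ∀ v ∈ E, ρ g v = v) :
    g ∈ Subgroup.closure {t ∈ T | ∀ v ∈ E, ρ t v = v} := by
  -- A vector of `E` outside the finitely many reflecting hyperplanes that do not contain `E`.
  obtain ⟨v, hvE, hv⟩ : ∃ v ∈ E, ∀ t ∈ T, ρ t v = v → ∀ x ∈ E, ρ t x = x := by
    choose! f a ha hfa using hT
    obtain ⟨v, hvE, hv⟩ := Dual.exists_forall_mem_ne_zero_of_forall_exists E
      (fun t : {t ∈ T | ∃ x ∈ E, ρ t x ≠ x} ↦ f t) fun ⟨t, ht, x, hxE, hx⟩ ↦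
        ⟨x, hxE, fun h0 ↦ hx (by simp [hfa t ht, preReflection_apply, h0])⟩
    refine ⟨v, hvE, fun t ht htv ↦ ?_⟩
    by_contra! hE
    rw [hfa t ht, preReflection_apply_eq_self_iff (ha t ht)] at htv
    exact hv ⟨t, ht, hE⟩ htv
  refine Subgroup.closure_mono ?_ (mem_closure_setOf_apply_eq_self hρ hT hconj hgen (hg v hvE))
  exact fun t ⟨ht, htv⟩ ↦ ⟨ht, hv t ht htv⟩

end Steinberg

section MovedSubmodule

variable {k V : Type*} [Field k] [AddCommGroup V] [Module k V] {A B : Set (End k V)ˣ}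
  {U : Submodule k V}

/-- The sum of the images of `s - 1` for `s ∈ A`; for a set of reflections it is the span of their
roots. -/
def movedSubmodule (A : Set (End k V)ˣ) : Submodule k V :=
  ⨆ s ∈ A, LinearMap.range ((s : End k V) - 1)

/-- `W₀` leaves no subspace strictly between `0` and the nonzero subspace `U` invariant. That `U`
itself is invariant is not part of the definition, to match `IsIrreducibleParabolic`. -/
def ActsIrreduciblyOn (W₀ : Subgroup (End k V)ˣ) (U : Submodule k V) : Prop :=
  U ≠ ⊥ ∧ ∀ U' ≤ U, (∀ w ∈ W₀, ∀ v ∈ U', (w : End k V) v ∈ U') → U' = ⊥ ∨ U' = U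

lemma movedSubmodule_le_iff :
    movedSubmodule A ≤ U ↔ ∀ s ∈ A, ∀ x, (s : End k V) x - x ∈ U := by
  simp [movedSubmodule, iSup_le_iff, LinearMap.range_le_iff_comap, Submodule.eq_top_iff']

lemma movedSubmodule_mono (h : A ⊆ B) : movedSubmodule A ≤ movedSubmodule B :=
  biSup_mono h

lemma sub_mem_movedSubmodule {s : (End k V)ˣ} (hs : s ∈ A) (x : V) :
    (s : End k V) x - x ∈ movedSubmodule A :=
  movedSubmodule_le_iff.1 le_rfl s hs x

lemma apply_mem_movedSubmodule {s : (End k V)ˣ} (hs : s ∈ A) {x : V}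
    (hx : x ∈ movedSubmodule A) : (s : End k V) x ∈ movedSubmodule A := by
  simpa using add_mem (sub_mem_movedSubmodule hs x) hx

lemma apply_mem_movedSubmodule_of_conj_mem {c : (End k V)ˣ} (hc : ∀ s ∈ A, c * s * c⁻¹ ∈ A) {x : V}
    (hx : x ∈ movedSubmodule A) : (c : End k V) x ∈ movedSubmodule A := by
  suffices movedSubmodule A ≤ (movedSubmodule A).comap (c : End k V) from this hx
  refine movedSubmodule_le_iff.2 fun s hs y ↦ ?_
  have hcs := sub_mem_movedSubmodule (hc s hs) ((c : End k V) y)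
  rw [← Module.End.mul_apply, ← Units.val_mul] at hcs
  simpa using hcs

lemma sub_mem_movedSubmodule_of_mem_closure {w : (End k V)ˣ} (hw : w ∈ Subgroup.closure A) (x : V) :
    (w : End k V) x - x ∈ movedSubmodule A := by
  induction hw using Subgroup.closure_induction generalizing x with
  | mem s hs => exact sub_mem_movedSubmodule hs x
  | one => simp
  | mul u v _ _ hu hv => simpa using add_mem (hu ((v : End k V) x)) (hv x)
  | inv u _ hu =>
    have hinv : (u : End k V) ((↑u⁻¹ : End k V) x) = x := by
      rw [← Module.End.mul_apply, Units.mul_inv, Module.End.one_apply]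
    simpa [hinv] using neg_mem (hu ((↑u⁻¹ : End k V) x))

lemma closure_inf_closure_eq_bot (h : Disjoint (movedSubmodule A) (movedSubmodule B)) :
    Subgroup.closure A ⊓ Subgroup.closure B = ⊥ := by
  refine (Subgroup.eq_bot_iff_forall _).2 fun w hw ↦ Units.ext (LinearMap.ext fun x ↦ ?_)
  exact sub_eq_zero.1 (Submodule.disjoint_def.1 h _
    (sub_mem_movedSubmodule_of_mem_closure hw.1 x) (sub_mem_movedSubmodule_of_mem_closure hw.2 x))

lemma apply_mem_of_mem_closure (hA : ∀ s ∈ A, s * s = 1)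
    (hU : ∀ s ∈ A, ∀ x ∈ U, (s : End k V) x ∈ U) {w : (End k V)ˣ} (hw : w ∈ Subgroup.closure A)
    {x : V} (hx : x ∈ U) : (w : End k V) x ∈ U := by
  induction hw using Subgroup.closure_induction'' generalizing x with
  | mem s hs => exact hU s hs x hx
  | inv_mem s hs => rw [inv_eq_of_mul_eq_one_left (hA s hs)]; exact hU s hs x hx
  | one => exact hx
  | mul _ _ _ _ hu hv => exact hu (hv hx)

end MovedSubmodule

section ReflectionSystems

variable {k V : Type*} [Field k] [AddCommGroup V] [Module k V] {R A B : Set (End k V)ˣ}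

/-- A set of order-two reflections closed under conjugation by its own elements. -/
structure IsReflectionSystem (R : Set (End k V)ˣ) : Prop where
  isOrderTwoReflection : ∀ s ∈ R, IsOrderTwoReflection (s : End k V)
  conj_mem : ∀ s ∈ R, ∀ t ∈ R, s * t * s⁻¹ ∈ R

namespace IsReflectionSystem

lemma inter_subgroup (hR : IsReflectionSystem R) (H : Subgroup (End k V)ˣ) :
    IsReflectionSystem (R ∩ H) where
  isOrderTwoReflection s hs := hR.isOrderTwoReflection s hs.1
  conj_mem s hs t ht :=
    ⟨hR.conj_mem s hs.1 t ht.1, H.mul_mem (H.mul_mem hs.2 ht.2) (H.inv_mem hs.2)⟩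

lemma mul_self_eq_one (hA : IsReflectionSystem A) {s : (End k V)ˣ} (hs : s ∈ A) : s * s = 1 :=
  Units.ext (hA.isOrderTwoReflection s hs).mul_self_eq_one

lemma inv_eq_self (hA : IsReflectionSystem A) {s : (End k V)ˣ} (hs : s ∈ A) : s⁻¹ = s :=
  inv_eq_of_mul_eq_one_left (hA.mul_self_eq_one hs)

lemma conj_mem_of_mem_closure (hA : IsReflectionSystem A) {w t : (End k V)ˣ}
    (hw : w ∈ Subgroup.closure A) (ht : t ∈ A) : w * t * w⁻¹ ∈ A := by
  induction hw using Subgroup.closure_induction'' generalizing t with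
  | mem s hs => exact hA.conj_mem s hs t ht
  | inv_mem s hs => rw [hA.inv_eq_self hs]; exact hA.conj_mem s hs t ht
  | one => simpa using ht
  | mul u v _ _ hu hv => simpa [mul_assoc] using hu (hv ht)

lemma conj_mem_sdiff (hA : IsReflectionSystem A) (hB : IsReflectionSystem B) {s t : (End k V)ˣ}
    (hsA : s ∈ A) (hsB : s ∈ B) (ht : t ∈ A \ B) : s * t * s⁻¹ ∈ A \ B := by
  refine ⟨hA.conj_mem s hsA t ht.1, fun h ↦ ht.2 ?_⟩
  have hs : s⁻¹ ∈ Subgroup.closure B := inv_mem (Subgroup.subset_closure hsB)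
  simpa [mul_assoc] using hB.conj_mem_of_mem_closure hs h

variable [NeZero (2 : k)]

lemma one_notMem (hA : IsReflectionSystem A) : 1 ∉ A :=
  fun h ↦ (hA.isOrderTwoReflection 1 h).ne_one rfl

lemma exists_apply_ne_self (hA : IsReflectionSystem A) {s : (End k V)ˣ} (hs : s ∈ A) :
    ∃ x, (s : End k V) x ≠ x := by
  by_contra! h
  exact (hA.isOrderTwoReflection s hs).ne_one (LinearMap.ext h)

lemma movedSubmodule_sdiff (hA : IsReflectionSystem A) (hB : IsReflectionSystem B)
    (hirr : ActsIrreduciblyOn (Subgroup.closure A) (movedSubmodule A)) (hAB : ¬A ⊆ B) :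
    movedSubmodule (A \ B) = movedSubmodule A := by
  refine (hirr.2 _ (movedSubmodule_mono Set.sdiff_subset) fun w hw x hx ↦
    apply_mem_of_mem_closure (fun s ↦ hA.mul_self_eq_one) (fun s hs y hy ↦ ?_) hw hx).resolve_left
    fun hbot ↦ ?_
  · by_cases hsB : s ∈ B
    · exact apply_mem_movedSubmodule_of_conj_mem (fun t ↦ hA.conj_mem_sdiff hB hs hsB) hy
    · exact apply_mem_movedSubmodule (A := A \ B) ⟨hs, hsB⟩ hy
  · obtain ⟨s, hs⟩ := Set.not_subset.1 hAB
    obtain ⟨x, hx⟩ := hA.exists_apply_ne_self hs.1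
    exact hx (sub_eq_zero.1 <| (Submodule.mem_bot k).1 <|
      hbot ▸ sub_mem_movedSubmodule (A := A \ B) hs x)

lemma disjoint_movedSubmodule (hA : IsReflectionSystem A)
    (hirr : ActsIrreduciblyOn (Subgroup.closure A) (movedSubmodule A)) (hAB : ¬A ⊆ B)
    (hfix : ∀ s ∈ A \ B, ∀ x ∈ movedSubmodule B, (s : End k V) x = x) :
    Disjoint (movedSubmodule A) (movedSubmodule B) := by
  refine disjoint_iff.2 ((hirr.2 _ inf_le_left fun w hw x hx ↦ apply_mem_of_mem_closure
    (fun s ↦ hA.mul_self_eq_one) (fun s hs y hy ↦ ?_) hw hx).resolve_right fun hle ↦ ?_)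
  · refine ⟨apply_mem_movedSubmodule hs hy.1, ?_⟩
    by_cases hsB : s ∈ B
    · exact apply_mem_movedSubmodule hsB hy.2
    · exact (hfix s ⟨hs, hsB⟩ y hy.2).symm ▸ hy.2
  · obtain ⟨s, hs⟩ := Set.not_subset.1 hAB
    obtain ⟨x, hx⟩ := hA.exists_apply_ne_self hs.1
    have hsx := hfix s hs _ (inf_eq_left.1 hle (sub_mem_movedSubmodule hs.1 x))
    have hssx : (s : End k V) ((s : End k V) x) = x :=
      LinearMap.congr_fun (hA.isOrderTwoReflection s hs.1).mul_self_eq_one x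
    rw [map_sub, hssx] at hsx
    refine hx (sub_eq_zero.1 ((smul_eq_zero_iff_right (two_ne_zero' k)).1 ?_))
    linear_combination (norm := module) -hsx

theorem disjoint_movedSubmodule_of_commute (hA : IsReflectionSystem A) (hB : IsReflectionSystem B)
    (hirrA : ActsIrreduciblyOn (Subgroup.closure A) (movedSubmodule A))
    (hirrB : ActsIrreduciblyOn (Subgroup.closure B) (movedSubmodule B))
    (hAB : ¬A ⊆ B) (hBA : ¬B ⊆ A) (hcomm : ∀ s ∈ A \ B, ∀ t ∈ B \ A, s * t = t * s) :
    Disjoint (movedSubmodule A) (movedSubmodule B) := by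
  refine hA.disjoint_movedSubmodule hirrA hAB fun s hs x hx ↦ ?_
  rw [← hB.movedSubmodule_sdiff hA hirrB hBA] at hx
  suffices movedSubmodule (B \ A) ≤ (s : End k V).fixedSubmodule from
    LinearMap.mem_fixedSubmodule_iff.1 (this hx)
  refine movedSubmodule_le_iff.2 fun t ht y ↦ LinearMap.mem_fixedSubmodule_iff.2 ?_
  refine (hA.isOrderTwoReflection s hs.1).apply_apply_sub_of_commute
    (hB.isOrderTwoReflection t ht.1) (congrArg Units.val (hcomm s hs t ht)) (fun hst ↦ ?_) y
  exact hs.2 (Units.ext hst ▸ ht.1)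

theorem closure_inf_eq_bot_and_commute (hA : IsReflectionSystem A) (hB : IsReflectionSystem B)
    (hirrA : ActsIrreduciblyOn (Subgroup.closure A) (movedSubmodule A))
    (hirrB : ActsIrreduciblyOn (Subgroup.closure B) (movedSubmodule B))
    (hAB : ¬A ⊆ B) (hBA : ¬B ⊆ A) (hcomm : ∀ s ∈ A \ B, ∀ t ∈ B \ A, s * t = t * s) :
    Subgroup.closure A ⊓ Subgroup.closure B = ⊥ ∧
      ∀ a ∈ Subgroup.closure A, ∀ b ∈ Subgroup.closure B, a * b = b * a := by
  have hinf := closure_inf_closure_eq_bot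
    (hA.disjoint_movedSubmodule_of_commute hB hirrA hirrB hAB hBA hcomm)
  have hnotMem {s : (End k V)ˣ} (hsA : s ∈ A) (hsB : s ∈ B) : False := by
    have hs : s ∈ Subgroup.closure A ⊓ Subgroup.closure B :=
      ⟨Subgroup.subset_closure hsA, Subgroup.subset_closure hsB⟩
    rw [hinf, Subgroup.mem_bot] at hs
    exact hA.one_notMem (hs ▸ hsA)
  have hcentralizer : Subgroup.closure B ≤ Subgroup.centralizer (Subgroup.closure A) := by
    rw [Subgroup.centralizer_closure, Subgroup.closure_le]
    exact fun t ht ↦ Subgroup.mem_centralizer_iff.2 fun s hs ↦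
      hcomm s ⟨hs, hnotMem hs⟩ t ⟨ht, fun htA ↦ hnotMem htA ht⟩
  exact ⟨hinf, fun a ha b hb ↦ Subgroup.mem_centralizer_iff.1 (hcentralizer hb) a ha⟩

end IsReflectionSystem

theorem IsReflectionSystem.closure_inter_eq [CharZero k] [FiniteDimensional k V]
    (hR : IsReflectionSystem R) {W W₀ : Subgroup (End k V)ˣ} [Finite W]
    (hgen : Subgroup.closure R = W) {E : Submodule k V}
    (hW₀ : ∀ w, w ∈ W₀ ↔ w ∈ W ∧ ∀ v ∈ E, (w : End k V) v = v) :
    Subgroup.closure (R ∩ W₀) = W₀ := by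
  refine le_antisymm ((Subgroup.closure_le _).2 Set.inter_subset_right) fun w hw ↦ ?_
  obtain ⟨hwW, hwE⟩ := (hW₀ w).1 hw
  let ρ : Representation k W V := (Units.coeHom (End k V)).comp W.subtype
  have hTgen : Subgroup.closure (W.subtype ⁻¹' R) = ⊤ := by
    have himage : W.subtype '' (W.subtype ⁻¹' R) = R :=
      Set.image_preimage_eq_of_subset fun t ht ↦ ⟨⟨t, hgen ▸ Subgroup.subset_closure ht⟩, rfl⟩
    refine Subgroup.map_injective W.subtype_injective ?_
    rw [MonoidHom.map_closure, himage, hgen, ← MonoidHom.range_eq_map, Subgroup.range_subtype]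
  have hmem := Subgroup.mem_map_of_mem W.subtype <|
    mem_closure_setOf_forall_mem_apply_eq_self (ρ := ρ) (T := W.subtype ⁻¹' R) (g := ⟨w, hwW⟩)
      (Units.val_injective.comp W.subtype_injective)
      (fun t ht ↦ hR.isOrderTwoReflection t ht)
      (fun t ht g ↦ hR.conj_mem_of_mem_closure (hgen.symm ▸ g.2) ht) hTgen hwE
  rw [MonoidHom.map_closure] at hmem
  refine Subgroup.closure_mono ?_ hmem
  rintro _ ⟨t, ⟨ht, htE⟩, rfl⟩
  exact ⟨ht, (hW₀ t).2 ⟨t.2, htE⟩⟩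

theorem irreducible_parabolics_commutation_trichotomy_general [CharZero k] [FiniteDimensional k V]
    {W W₁ W₂ : Subgroup (End k V)ˣ} [Finite W] (hR : IsReflectionSystem R)
    (hgen : Subgroup.closure R = W) {E₁ E₂ : Submodule k V}
    (hW₁ : ∀ w, w ∈ W₁ ↔ w ∈ W ∧ ∀ v ∈ E₁, (w : End k V) v = v)
    (hW₂ : ∀ w, w ∈ W₂ ↔ w ∈ W ∧ ∀ v ∈ E₂, (w : End k V) v = v)
    (hirr₁ : ActsIrreduciblyOn W₁ (movedSubmodule (R ∩ W₁)))
    (hirr₂ : ActsIrreduciblyOn W₂ (movedSubmodule (R ∩ W₂))) :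
    (∀ s₁ ∈ (R ∩ W₁) \ (R ∩ W₂), ∀ s₂ ∈ (R ∩ W₂) \ (R ∩ W₁), s₁ * s₂ = s₂ * s₁) ↔
      (W₁ ≤ W₂ ∨ W₂ ≤ W₁ ∨ (W₁ ⊓ W₂ = ⊥ ∧ ∀ a ∈ W₁, ∀ b ∈ W₂, a * b = b * a)) := by
  have hcl₁ := hR.closure_inter_eq hgen hW₁
  have hcl₂ := hR.closure_inter_eq hgen hW₂
  constructor
  · intro hcomm
    by_cases h₁₂ : R ∩ W₁ ⊆ R ∩ W₂
    · exact .inl (hcl₁ ▸ hcl₂ ▸ Subgroup.closure_mono h₁₂)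
    by_cases h₂₁ : R ∩ W₂ ⊆ R ∩ W₁
    · exact .inr (.inl (by rw [← hcl₁, ← hcl₂]; exact Subgroup.closure_mono h₂₁))
    refine .inr (.inr ?_)
    have htrivial := (hR.inter_subgroup W₁).closure_inf_eq_bot_and_commute (hR.inter_subgroup W₂)
      (by rwa [hcl₁]) (by rwa [hcl₂]) h₁₂ h₂₁ hcomm
    rwa [hcl₁, hcl₂] at htrivial
  · rintro (h | h | ⟨-, h⟩) s ⟨hs₁, hs₂⟩ t ⟨ht₂, ht₁⟩
    · exact absurd ⟨hs₁.1, h hs₁.2⟩ hs₂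
    · exact absurd ⟨ht₂.1, h ht₂.2⟩ ht₁
    · exact h s hs₁.2 t ht₂.2

end ReflectionSystems

lemma isReflectionSystem_setOf_isReflection {V : Type*} [AddCommGroup V] [Module ℂ V]
    [FiniteDimensional ℂ V] {W : Subgroup (End ℂ V)ˣ}
    (h : ∀ w ∈ {w | w ∈ W ∧ IsReflection w}, w * w = 1) :
    IsReflectionSystem {w | w ∈ W ∧ IsReflection w} where
  isOrderTwoReflection s hs := isOrderTwoReflection_of_finrank_ker_sub_one_add_one (h s hs) hs.2.2
  conj_mem s hs t ht := by
    refine ⟨W.mul_mem (W.mul_mem hs.1 ht.1) (W.inv_mem hs.1), by simpa using ht.2.1, ?_⟩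
    obtain ⟨f, a, ha, hta⟩ :=
      isOrderTwoReflection_of_finrank_ker_sub_one_add_one (h t ht) ht.2.2
    exact IsOrderTwoReflection.finrank_ker_sub_one_add_one
      ⟨_, _, (dual_apply_apply_self s).trans ha,
        apply_conj_eq_preReflection (ρ := Units.coeHom (End ℂ V)) hta s⟩

/-- for two irreducible parabolic subgroups `W₁, W₂` of a finite complex
2-reflection group `W`, the commutation of all reflections in `R₁ \ R₂` with all
reflections in `R₂ \ R₁` is equivalent to: `W₁ ⊆ W₂`, or `W₂ ⊆ W₁`, or
(`W₁ ∩ W₂ = {1}` and `W₁` and `W₂` commute elementwise). -/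
theorem irreducible_parabolics_commutation_trichotomy
    {V : Type*} [AddCommGroup V] [Module ℂ V] [FiniteDimensional ℂ V]
    (W W₁ W₂ : Subgroup (Module.End ℂ V)ˣ)
    (hWfin : (W : Set (Module.End ℂ V)ˣ).Finite)
    (R : Set (Module.End ℂ V)ˣ)
    (hR : R = {w : (Module.End ℂ V)ˣ | w ∈ W ∧ IsReflection w})
    (hgen : Subgroup.closure R = W)
    (horder : ∀ w ∈ R, w * w = 1)
    (R₁ R₂ : Set (Module.End ℂ V)ˣ)
    (hR₁ : R₁ = R ∩ (W₁ : Set (Module.End ℂ V)ˣ))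
    (hR₂ : R₂ = R ∩ (W₂ : Set (Module.End ℂ V)ˣ))
    (hpar₁ : ∃ U : Submodule ℂ V, ∀ w : (Module.End ℂ V)ˣ,
      w ∈ W₁ ↔ w ∈ W ∧ ∀ v ∈ U, (w : Module.End ℂ V) v = v)
    (hpar₂ : ∃ U : Submodule ℂ V, ∀ w : (Module.End ℂ V)ˣ,
      w ∈ W₂ ↔ w ∈ W ∧ ∀ v ∈ U, (w : Module.End ℂ V) v = v)
    (hStein₁ : ∀ w : (Module.End ℂ V)ˣ, w ∈ W₁ ↔ w ∈ W ∧
      ∀ v ∈ ⨅ s ∈ R₁, LinearMap.ker ((s : Module.End ℂ V) - 1),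
        (w : Module.End ℂ V) v = v)
    (hStein₂ : ∀ w : (Module.End ℂ V)ˣ, w ∈ W₂ ↔ w ∈ W ∧
      ∀ v ∈ ⨅ s ∈ R₂, LinearMap.ker ((s : Module.End ℂ V) - 1),
        (w : Module.End ℂ V) v = v)
    (hirr₁ : IsIrreducibleParabolic W₁ R₁)
    (hirr₂ : IsIrreducibleParabolic W₂ R₂) :
    (∀ s₁ ∈ R₁ \ R₂, ∀ s₂ ∈ R₂ \ R₁, s₁ * s₂ = s₂ * s₁) ↔
      (W₁ ≤ W₂ ∨ W₂ ≤ W₁ ∨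
        (W₁ ⊓ W₂ = ⊥ ∧ ∀ a ∈ W₁, ∀ b ∈ W₂, a * b = b * a)) := by
  subst hR hR₁ hR₂
  obtain ⟨_, h₁⟩ := hpar₁
  obtain ⟨_, h₂⟩ := hpar₂
  have : Finite W := hWfin
  exact irreducible_parabolics_commutation_trichotomy_general
    (isReflectionSystem_setOf_isReflection horder) hgen h₁ h₂ hirr₁ hirr₂
end

section
/- Let (G, G⁺, Δ) be a Garside structure. For every x ∈ G there exist integers 0 ≤ m < n such that φ^m(x) = φ^n(x); consequently each of the elements φ^m(x), …, φ^{n−1}(x) is recurrent. -/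
open scoped Pointwise Classical

/-- A Garside structure on a group `G`: a submonoid `pos` of positive elements with
trivial units, prefix and suffix lattice operations, and a Garside element `delta`. -/
structure GarsideStructure (G : Type*) [Group G] where
  /-- the submonoid of positive elements -/
  pos : Submonoid G
  /-- the Garside element Δ -/
  delta : G
  /-- meet for the prefix order -/
  meet : G → G → G
  /-- join for the prefix order -/
  join : G → G → G
  /-- meet for the suffix order -/
  rmeet : G → G → G
  /-- join for the suffix order -/
  rjoin : G → G → G
  units_triv : ∀ a : G, a ∈ pos → a⁻¹ ∈ pos → a = 1
  meet_le_left : ∀ a b : G, (meet a b)⁻¹ * a ∈ pos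
  meet_le_right : ∀ a b : G, (meet a b)⁻¹ * b ∈ pos
  le_meet : ∀ a b c : G, c⁻¹ * a ∈ pos → c⁻¹ * b ∈ pos → c⁻¹ * meet a b ∈ pos
  le_join_left : ∀ a b : G, a⁻¹ * join a b ∈ pos
  le_join_right : ∀ a b : G, b⁻¹ * join a b ∈ pos
  join_le : ∀ a b c : G, a⁻¹ * c ∈ pos → b⁻¹ * c ∈ pos → (join a b)⁻¹ * c ∈ pos
  rmeet_le_left : ∀ a b : G, a * (rmeet a b)⁻¹ ∈ pos
  rmeet_le_right : ∀ a b : G, b * (rmeet a b)⁻¹ ∈ pos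
  le_rmeet : ∀ a b c : G, a * c⁻¹ ∈ pos → b * c⁻¹ ∈ pos → rmeet a b * c⁻¹ ∈ pos
  rjoin_le_left : ∀ a b : G, rjoin a b * a⁻¹ ∈ pos
  rjoin_le_right : ∀ a b : G, rjoin a b * b⁻¹ ∈ pos
  rjoin_le : ∀ a b c : G, c * a⁻¹ ∈ pos → c * b⁻¹ ∈ pos → c * (rjoin a b)⁻¹ ∈ pos
  delta_pos : delta ∈ pos
  /-- Δ is balanced: its positive prefixes coincide with its positive suffixes -/
  delta_balanced : ∀ s : G, s ∈ pos → (s⁻¹ * delta ∈ pos ↔ delta * s⁻¹ ∈ pos)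
  /-- the set of simple elements (divisors of Δ) is finite -/
  divDelta_finite : {s : G | s ∈ pos ∧ s⁻¹ * delta ∈ pos}.Finite
  /-- the simple elements generate `G` -/
  divDelta_generates : Subgroup.closure {s : G | s ∈ pos ∧ s⁻¹ * delta ∈ pos} = ⊤
  /-- the atoms generate the positive monoid -/
  atoms_generate :
    Submonoid.closure {a : G | a ∈ pos ∧ a ≠ 1 ∧
      ∀ b ∈ pos, b⁻¹ * a ∈ pos → b = 1 ∨ b = a} = pos
  /-- every atom divides Δ -/
  atoms_divide_delta : ∀ a : G, a ∈ pos → a ≠ 1 →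
    (∀ b ∈ pos, b⁻¹ * a ∈ pos → b = 1 ∨ b = a) → a⁻¹ * delta ∈ pos
  /-- every element is bounded below and above by powers of Δ -/
  delta_bounds : ∀ x : G, ∃ p q : ℤ, p ≤ q ∧ (delta ^ p)⁻¹ * x ∈ pos ∧ x⁻¹ * delta ^ q ∈ pos
  /-- conjugation by Δ maps the positive monoid bijectively onto itself -/
  conj_delta : ∀ a : G, a ∈ pos ↔ delta * a * delta⁻¹ ∈ pos
  /-- some positive power of Δ is central -/
  central_power : ∃ n : ℕ, 0 < n ∧ delta ^ n ∈ Subgroup.center G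
  /-- no infinite strictly decreasing (for the prefix order) sequence of positive elements -/
  no_infinite_descent : ¬ ∃ f : ℕ → G, (∀ n, f n ∈ pos) ∧
    ∀ n, (f (n + 1))⁻¹ * f n ∈ pos ∧ f (n + 1) ≠ f n

namespace GarsideStructure

variable {G : Type*} [Group G] (S : GarsideStructure G)

/-- the prefix order: `a ≼ b` iff `a⁻¹ * b` is positive -/
def le (a b : G) : Prop := a⁻¹ * b ∈ S.pos

/-- the set of positive prefixes of an element -/
def Div (d : G) : Set G := {s : G | s ∈ S.pos ∧ S.le s d}

/-- atoms: nontrivial positive elements with no nontrivial proper positive prefix -/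
def IsAtomic (a : G) : Prop :=
  a ∈ S.pos ∧ a ≠ 1 ∧ ∀ b ∈ S.pos, S.le b a → b = 1 ∨ b = a

/-- the set of atoms -/
def atoms : Set G := {a : G | S.IsAtomic a}

/-- the left denominator of `x`: `D_L x = (1 ∧ x)⁻¹` -/
def DL (x : G) : G := (S.meet 1 x)⁻¹

/-- the left numerator of `x`: `N_L x = D_L x * x` -/
def NL (x : G) : G := S.DL x * x

/-- the (left) swap `φ(x) = N_L x * (D_L x)⁻¹ = D_L x * x * (D_L x)⁻¹` -/
def swap (x : G) : G := S.DL x * x * (S.DL x)⁻¹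

/-- an element is recurrent if it is fixed by some positive iterate of the swap map -/
def Recurrent (x : G) : Prop := ∃ m : ℕ, 0 < m ∧ S.swap^[m] x = x

/-- the set `R(x)` of recurrent conjugates of `x` -/
def Rset (x : G) : Set G := {y : G | IsConj x y ∧ S.Recurrent y}

/-- the set `C⁺(x)` of positive conjugates of `x` -/
def Cpos (x : G) : Set G := {y : G | IsConj x y ∧ y ∈ S.pos}

/-- the set `C⁻(x)` of negative conjugates of `x` -/
def Cneg (x : G) : Set G := {y : G | IsConj x y ∧ y⁻¹ ∈ S.pos}

/-- the transport of `u` at `y`: with `y = a⁻¹ b` reduced, `u^{(1)} = (a u) ∧ (b u)` -/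
def transport (y u : G) : G := S.meet (S.DL y * u) (S.NL y * u)

/-- `Δ_X`: the least upper bound for the prefix order of a set `X` (`1` if there is none) -/
noncomputable def deltaOf (X : Set G) : G :=
  if h : ∃ d : G, (∀ x ∈ X, S.le x d) ∧ ∀ c : G, (∀ x ∈ X, S.le x c) → S.le d c
  then h.choose else 1

/-- the closure `X̄ = Div(Δ_X) ∩ 𝒜` of a set of atoms -/
noncomputable def closureOf (X : Set G) : Set G := S.Div (S.deltaOf X) ∩ S.atoms

/-- the subgroup `G_X` generated by the closure of `X` -/
noncomputable def GX (X : Set G) : Subgroup G := Subgroup.closure (S.closureOf X)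

/-- the support of an element: the closure of the set of atoms appearing in atom
factorizations of its left denominator and left numerator -/
noncomputable def supp (x : G) : Set G :=
  if h : ∃ p : List G × List G,
      (∀ a ∈ p.1, a ∈ S.atoms) ∧ (∀ a ∈ p.2, a ∈ S.atoms) ∧
      p.1.prod = S.DL x ∧ p.2.prod = S.NL x
  then S.closureOf ({a : G | a ∈ h.choose.1} ∪ {a : G | a ∈ h.choose.2})
  else ∅

/-- an LCM-Garside structure -/
structure IsLCM : Prop where
  delta_eq : S.delta = S.deltaOf S.atoms
  balanced : ∀ X ⊆ S.atoms, ∀ s ∈ S.pos,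
    (S.le s (S.deltaOf X) ↔ S.deltaOf X * s⁻¹ ∈ S.pos)
  div_eq : ∀ X ⊆ S.atoms,
    S.Div (S.deltaOf X) = S.Div S.delta ∩ {g : G | g ∈ S.GX X ∧ g ∈ S.pos}
  factor_closed : ∀ X ⊆ S.atoms, ∀ g : G, g ∈ S.GX X → g ∈ S.pos →
    ∀ a b : G, a ∈ S.pos → b ∈ S.pos → g = a * b → a ∈ S.GX X ∧ b ∈ S.GX X
  lattice_closed : ∀ X ⊆ S.atoms, ∀ a b : G, a ∈ S.GX X → b ∈ S.GX X →
    S.meet a b ∈ S.GX X ∧ S.join a b ∈ S.GX X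
  fraction_closed : ∀ X ⊆ S.atoms, ∀ g : G, g ∈ S.GX X →
    S.DL g ∈ S.GX X ∧ S.NL g ∈ S.GX X

/-- a standard parabolic subgroup: the subgroup generated by a saturated set of atoms -/
noncomputable def IsStandardParabolic (H : Subgroup G) : Prop :=
  ∃ X : Set G, X ⊆ S.atoms ∧ S.closureOf X = X ∧ H = S.GX X

/-- a parabolic subgroup: a conjugate of a standard parabolic subgroup -/
noncomputable def IsParabolic (H : Subgroup G) : Prop :=
  ∃ (P : Subgroup G) (c : G), S.IsStandardParabolic P ∧
    H = Subgroup.map (MulAut.conj c).toMonoidHom P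

/-- the structure is support-preserving if conjugations between positive elements
conjugate the corresponding parabolic subgroups of the supports -/
noncomputable def SupportPreserving : Prop :=
  ∀ y ∈ S.pos, ∀ z ∈ S.pos, ∀ α : G, α⁻¹ * y * α = z →
    Subgroup.map (MulAut.conj α⁻¹).toMonoidHom (S.GX (S.supp y)) = S.GX (S.supp z)

/-- `P` is the parabolic closure of `x` -/
noncomputable def IsParabolicClosure (x : G) (P : Subgroup G) : Prop :=
  S.IsParabolic P ∧ x ∈ P ∧ ∀ H : Subgroup G, S.IsParabolic H → x ∈ H → P ≤ H

end GarsideStructure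


/-!
The argument takes place in any group with a left-invariant meet-semilattice order. Call `g`
quasi-central if `g ∈ normalizer (Ici 1)`, that is, if right translation by `g` is an order
automorphism. If `g ≤ 1 ≤ h` are quasi-central, then the swap maps `[g, h]` to itself: with
`e = 1 ⊓ x`, the inequality `g ≤ e⁻¹ * x * e` follows from `e * g ≤ x * g ≤ x * e`, while
`e⁻¹ * x * e ≤ h` means `x * e * h⁻¹ ≤ 1 ⊓ x`, which holds because `x * e ≤ x ≤ h` and `e ≤ h`. If
moreover `[1, d]` is finite for some quasi-central `d ≥ 1`, then so is `[1, d ^ n] = [1, d] ^ n`,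
hence every interval between powers of `d`. Swap orbits thus stay inside finite sets.
-/

open Function in
theorem iterate_mem_periodicPts_of_iterate_eq {α : Type*} {f : α → α} {x : α} {m n k : ℕ}
    (hmn : m < n) (heq : f^[m] x = f^[n] x) (hmk : m ≤ k) : f^[k] x ∈ periodicPts f := by
  refine ⟨n - m, Nat.sub_pos_of_lt hmn, ?_⟩
  calc f^[n - m] (f^[k] x)
      = f^[k - m] (f^[n] x) := by
        rw [← iterate_add_apply, ← iterate_add_apply, show n - m + k = k - m + n by omega]
    _ = f^[k - m] (f^[m] x) := by rw [heq]
    _ = f^[k] x := by rw [← iterate_add_apply, Nat.sub_add_cancel hmk]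

section LeftOrderedGroup

open Set Function Subgroup

variable {G : Type*} [Group G]

section Preorder

variable [Preorder G] [MulLeftMono G] {a b g : G}

theorem mul_le_mul_iff_right_of_mem_normalizer (hg : g ∈ normalizer (Ici (1 : G))) :
    a * g ≤ b * g ↔ a ≤ b := by
  have hconj : (a * g)⁻¹ * (b * g) = g⁻¹ * (a⁻¹ * b) * g := by group
  rw [← le_inv_mul_iff_le, hconj, ← le_inv_mul_iff_le (a := b)]
  exact (mem_set_normalizer_iff''.1 hg _).symm

theorem mul_inv_le_iff_of_mem_normalizer (hg : g ∈ normalizer (Ici (1 : G))) :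
    a * g⁻¹ ≤ b ↔ a ≤ b * g := by
  rw [← mul_le_mul_iff_right_of_mem_normalizer hg, inv_mul_cancel_right]

theorem finite_Icc_of_finite_Icc_one (h : (Icc 1 (a⁻¹ * b)).Finite) : (Icc a b).Finite :=
  (h.preimage (mul_right_injective a⁻¹).injOn).subset fun _ hx ↦
    ⟨le_inv_mul_iff_le.2 hx.1, mul_le_mul_right hx.2 a⁻¹⟩

theorem zpow_le_zpow_of_one_le (ha : 1 ≤ a) {j k : ℤ} (hjk : j ≤ k) : a ^ j ≤ a ^ k := by
  obtain ⟨n, rfl⟩ := Int.le.dest hjk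
  rw [zpow_add, zpow_natCast]
  exact le_mul_of_one_le_right' (one_le_pow_of_one_le' ha n)

end Preorder

variable [SemilatticeInf G] [MulLeftMono G] {a b d g x : G}

open scoped Pointwise in
theorem Icc_one_mul (ha : 1 ≤ a) (hb : 1 ≤ b) (hbN : b ∈ normalizer (Ici (1 : G))) :
    Icc 1 (a * b) = Icc 1 a * Icc 1 b := by
  ext s
  constructor
  · rintro ⟨hs, hsab⟩
    refine ⟨s ⊓ a, ⟨le_inf hs ha, inf_le_right⟩, (s ⊓ a)⁻¹ * s,
      ⟨le_inv_mul_iff_le.2 inf_le_left, ?_⟩, mul_inv_cancel_left _ _⟩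
    rw [inv_mul_le_iff_le_mul, ← mul_inv_le_iff_of_mem_normalizer hbN]
    exact le_inf ((mul_inv_le_iff_of_mem_normalizer hbN).2 (le_mul_of_one_le_right' hb))
      ((mul_inv_le_iff_of_mem_normalizer hbN).2 hsab)
  · rintro ⟨t, ⟨ht, hta⟩, u, ⟨hu, hub⟩, rfl⟩
    exact ⟨one_le_mul ht hu,
      (mul_le_mul_right hub t).trans ((mul_le_mul_iff_right_of_mem_normalizer hbN).2 hta)⟩

theorem finite_Icc_one_pow (hd : 1 ≤ d) (hdN : d ∈ normalizer (Ici (1 : G)))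
    (hfin : (Icc 1 d).Finite) (n : ℕ) : (Icc 1 (d ^ n)).Finite := by
  induction n with
  | zero => simp
  | succ n ih =>
    rw [pow_succ, Icc_one_mul (one_le_pow_of_one_le' hd n) hd hdN]
    exact ih.mul hfin

theorem finite_Icc_zpow (hd : 1 ≤ d) (hdN : d ∈ normalizer (Ici (1 : G)))
    (hfin : (Icc 1 d).Finite) {p q : ℤ} (hpq : p ≤ q) : (Icc (d ^ p) (d ^ q)).Finite := by
  obtain ⟨n, rfl⟩ := Int.le.dest hpq
  apply finite_Icc_of_finite_Icc_one
  rw [zpow_add, inv_mul_cancel_left, zpow_natCast]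
  exact finite_Icc_one_pow hd hdN hfin n

/-- The swap `b * a⁻¹ = a * x * a⁻¹` of `x`, where `x = a⁻¹ * b` is the reduced left-fraction
decomposition, written out with `a = (1 ⊓ x)⁻¹`. -/
def fractionSwap (x : G) : G := (1 ⊓ x)⁻¹ * x * (1 ⊓ x)

theorem le_fractionSwap (hgN : g ∈ normalizer (Ici (1 : G))) (hg : g ≤ 1) (hgx : g ≤ x) :
    g ≤ fractionSwap x := by
  rw [fractionSwap, mul_assoc, le_inv_mul_iff_mul_le]
  calc (1 ⊓ x) * g ≤ x * g := (mul_le_mul_iff_right_of_mem_normalizer hgN).2 inf_le_right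
    _ ≤ x * (1 ⊓ x) := mul_le_mul_right (le_inf hg hgx) x

theorem fractionSwap_le (hgN : g ∈ normalizer (Ici (1 : G))) (hg : 1 ≤ g) (hxg : x ≤ g) :
    fractionSwap x ≤ g := by
  rw [fractionSwap, mul_assoc, inv_mul_le_iff_le_mul, ← mul_inv_le_iff_of_mem_normalizer hgN]
  refine le_inf ?_ ?_ <;> rw [mul_inv_le_iff_of_mem_normalizer hgN]
  · calc x * (1 ⊓ x) ≤ x := mul_le_of_le_one_right' inf_le_left
      _ ≤ 1 * g := by rwa [one_mul]
  · exact mul_le_mul_right (inf_le_left.trans hg) x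

theorem mapsTo_fractionSwap_Icc (hgN : g ∈ normalizer (Ici (1 : G)))
    (hdN : d ∈ normalizer (Ici (1 : G))) (hg : g ≤ 1) (hd : 1 ≤ d) :
    MapsTo fractionSwap (Icc g d) (Icc g d) := fun _ hx ↦
  ⟨le_fractionSwap hgN hg hx.1, fractionSwap_le hdN hd hx.2⟩

theorem garside_swap_eventually_periodic_general {G : Type*} [Group G] [SemilatticeInf G]
    [MulLeftMono G] {d x : G} (hd : 1 ≤ d) (hdN : d ∈ normalizer (Ici (1 : G)))
    (hfin : (Icc 1 d).Finite) (hx : ∃ p q : ℤ, d ^ p ≤ x ∧ x ≤ d ^ q) :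
    ∃ m n : ℕ, m < n ∧ fractionSwap^[m] x = fractionSwap^[n] x ∧
      ∀ k : ℕ, m ≤ k → fractionSwap^[k] x ∈ periodicPts fractionSwap := by
  obtain ⟨p, q, hpx, hxq⟩ := hx
  have hp : d ^ min p 0 ≤ 1 := by simpa using zpow_le_zpow_of_one_le hd (min_le_right p 0)
  have hq : 1 ≤ d ^ max q 0 := by simpa using zpow_le_zpow_of_one_le hd (le_max_right q 0)
  have hxI : x ∈ Icc (d ^ min p 0) (d ^ max q 0) :=
    ⟨(zpow_le_zpow_of_one_le hd (min_le_left p 0)).trans hpx,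
      hxq.trans (zpow_le_zpow_of_one_le hd (le_max_left q 0))⟩
  have hmaps := mapsTo_fractionSwap_Icc (zpow_mem hdN (min p 0)) (zpow_mem hdN (max q 0)) hp hq
  obtain ⟨m, n, hmn, heq⟩ := Finite.exists_lt_map_eq_of_forall_mem
    (fun k : ℕ ↦ hmaps.iterate k hxI)
    (finite_Icc_zpow hd hdN hfin ((min_le_right p 0).trans (le_max_right q 0)))
  exact ⟨m, n, hmn, heq, fun k ↦ iterate_mem_periodicPts_of_iterate_eq hmn heq⟩

end LeftOrderedGroup

namespace GarsideStructure

variable {G : Type*} [Group G] (S : GarsideStructure G)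

/-- The prefix order `≼` with its meets. It is not an instance since it depends on `S`. -/
abbrev prefixOrder : SemilatticeInf G where
  le := S.le
  le_refl a := by simp [le]
  le_trans a b c hab hbc := by simpa [le, mul_assoc] using S.pos.mul_mem hab hbc
  le_antisymm a b hab hba := inv_mul_eq_one.1 (S.units_triv _ hab (by simpa [le] using hba))
  inf := S.meet
  inf_le_left := S.meet_le_left
  inf_le_right := S.meet_le_right
  le_inf c a b := S.le_meet a b c

theorem mulLeftMono : letI := S.prefixOrder; MulLeftMono G :=
  letI := S.prefixOrder
  ⟨fun c a b (hab : a⁻¹ * b ∈ S.pos) ↦ show (c * a)⁻¹ * (c * b) ∈ S.pos by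
    simpa [mul_assoc] using hab⟩

theorem one_le_iff_mem_pos {a : G} : letI := S.prefixOrder; 1 ≤ a ↔ a ∈ S.pos :=
  show 1⁻¹ * a ∈ S.pos ↔ a ∈ S.pos by simp

theorem delta_mem_normalizer :
    letI := S.prefixOrder; S.delta ∈ Subgroup.normalizer (Set.Ici (1 : G)) :=
  fun a ↦ by simpa only [Set.mem_Ici, one_le_iff_mem_pos] using S.conj_delta a

theorem finite_Icc_one_delta : letI := S.prefixOrder; (Set.Icc 1 S.delta).Finite :=
  S.divDelta_finite.subset fun _ hs ↦ ⟨S.one_le_iff_mem_pos.1 hs.1, hs.2⟩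

theorem swap_eq_fractionSwap : letI := S.prefixOrder; S.swap = fractionSwap :=
  funext fun x ↦ congrArg ((S.meet 1 x)⁻¹ * x * ·) (inv_inv (S.meet 1 x))

end GarsideStructure

/-- the swap orbit of every element is eventually periodic, and the
elements on the periodic part are recurrent. -/
theorem garside_swap_eventually_periodic {G : Type*} [Group G]
    (S : GarsideStructure G) (x : G) :
    ∃ m n : ℕ, m < n ∧ S.swap^[m] x = S.swap^[n] x ∧
      ∀ k : ℕ, m ≤ k → k < n → S.Recurrent (S.swap^[k] x) := by
  let := S.prefixOrder
  have := S.mulLeftMono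
  obtain ⟨p, q, -, hx⟩ := S.delta_bounds x
  obtain ⟨m, n, hmn, heq, hper⟩ := garside_swap_eventually_periodic_general
    (S.one_le_iff_mem_pos.2 S.delta_pos) S.delta_mem_normalizer S.finite_Icc_one_delta ⟨p, q, hx⟩
  rw [← S.swap_eq_fractionSwap] at heq hper
  exact ⟨m, n, hmn, heq, fun k hmk _ ↦ hper k hmk⟩
end

section
/- Let (G, G⁺, Δ) be a Garside structure and x ∈ G. If x is conjugate in G to an element of G⁺, then φ^m(x) ∈ G⁺ for some m ≥ 0. -/
open scoped Pointwise Classical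

/-! Conjugation by `Δ` preserves positivity and every element becomes positive after
multiplication by a large power of `Δ`, so a conjugator of `x` to a positive element may be
taken to be some positive `v`. As `v` and `v * x` are both positive, the left denominator of `x`
is a suffix of `v`. Stripping it off leaves a prefix of `v` that conjugates `φ x` to the same
positive element, and this prefix is strictly smaller unless `x` is already positive.
Descending chains of positive elements being finite, the swap orbit meets `pos`. -/

namespace GarsideStructure

variable {G : Type*} [Group G] (S : GarsideStructure G)

theorem wellFounded_proper_prefix :
    WellFounded fun a b : S.pos ↦ S.le a b ∧ a ≠ b := by
  rw [wellFounded_iff_isEmpty_descending_chain]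
  refine ⟨fun ⟨f, hf⟩ ↦ S.no_infinite_descent ⟨fun n ↦ f n, fun n ↦ (f n).2, fun n ↦ ?_⟩⟩
  exact ⟨(hf n).1, Subtype.coe_ne_coe.mpr (hf n).2⟩

theorem DL_mem_pos (x : G) : S.DL x ∈ S.pos := by
  simpa only [DL, mul_one] using S.meet_le_left 1 x

theorem NL_mem_pos (x : G) : S.NL x ∈ S.pos :=
  S.meet_le_right 1 x

theorem mul_inv_DL_mem_pos {v x : G} (hv : v ∈ S.pos) (hvx : v * x ∈ S.pos) :
    v * (S.DL x)⁻¹ ∈ S.pos := by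
  simpa only [DL, inv_inv] using
    S.le_meet 1 x v⁻¹ (by rwa [inv_inv, mul_one]) (by rwa [inv_inv])

theorem mul_inv_DL_le (v x : G) : S.le (v * (S.DL x)⁻¹) v := by
  simpa [le] using S.DL_mem_pos x

theorem DL_eq_one_iff {x : G} : S.DL x = 1 ↔ x ∈ S.pos := by
  refine ⟨fun h ↦ ?_, fun hx ↦ ?_⟩
  · simpa only [NL, h, one_mul] using S.NL_mem_pos x
  · refine S.units_triv _ (S.DL_mem_pos x) ?_
    simpa only [one_mul] using S.mul_inv_DL_mem_pos (v := 1) S.pos.one_mem (by rwa [one_mul])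

theorem delta_zpow_mem_pos {n : ℤ} (hn : 0 ≤ n) : S.delta ^ n ∈ S.pos := by
  lift n to ℕ using hn
  simpa only [zpow_natCast] using pow_mem S.delta_pos n

theorem exists_delta_pow_mul_mem_pos (w : G) : ∃ k : ℕ, S.delta ^ k * w ∈ S.pos := by
  obtain ⟨p, -, -, hp, -⟩ := S.delta_bounds w
  refine ⟨(-p).toNat, ?_⟩
  have hnonneg : 0 ≤ ((-p).toNat : ℤ) + p := by lia
  have hfactor : S.delta ^ (-p).toNat * w =
      S.delta ^ (((-p).toNat : ℤ) + p) * ((S.delta ^ p)⁻¹ * w) := by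
    rw [zpow_add, zpow_natCast, mul_assoc, mul_inv_cancel_left]
  rw [hfactor]
  exact mul_mem (S.delta_zpow_mem_pos hnonneg) hp

theorem delta_pow_conj_mem_pos {y : G} (hy : y ∈ S.pos) (k : ℕ) :
    S.delta ^ k * y * (S.delta ^ k)⁻¹ ∈ S.pos := by
  induction k with
  | zero => simpa using hy
  | succ k ih => simpa only [pow_succ', mul_inv_rev, mul_assoc] using (S.conj_delta _).mp ih

theorem exists_mem_pos_conj_mem_pos {x y : G} (hy : y ∈ S.pos) (hxy : IsConj x y) :
    ∃ v ∈ S.pos, v * x * v⁻¹ ∈ S.pos := by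
  obtain ⟨w, rfl⟩ := isConj_iff.mp hxy
  obtain ⟨k, hk⟩ := S.exists_delta_pow_mul_mem_pos w
  refine ⟨S.delta ^ k * w, hk, ?_⟩
  simpa only [mul_inv_rev, mul_assoc] using S.delta_pow_conj_mem_pos hy k

theorem mul_inv_DL_conj_swap (v x : G) :
    v * (S.DL x)⁻¹ * S.swap x * (v * (S.DL x)⁻¹)⁻¹ = v * x * v⁻¹ := by
  rw [swap]
  group

theorem exists_iterate_swap_mem_pos_of_conj_mem_pos {v x : G} (hv : v ∈ S.pos)
    (hvx : v * x * v⁻¹ ∈ S.pos) : ∃ m : ℕ, S.swap^[m] x ∈ S.pos := by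
  lift v to S.pos using hv
  induction v using S.wellFounded_proper_prefix.induction generalizing x with
  | _ v ih =>
    by_cases hx : x ∈ S.pos
    · exact ⟨0, hx⟩
    have hv_mul : (v : G) * x ∈ S.pos := by
      simpa only [inv_mul_cancel_right] using mul_mem hvx v.2
    let u : S.pos := ⟨v * (S.DL x)⁻¹, S.mul_inv_DL_mem_pos v.2 hv_mul⟩
    have hu_ne : u ≠ v := by
      intro huv
      have hDL : (v : G) * (S.DL x)⁻¹ = v := congrArg Subtype.val huv
      exact hx (S.DL_eq_one_iff.mp (inv_eq_one.mp (mul_eq_left.mp hDL)))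
    have hu_conj : (u : G) * S.swap x * (u : G)⁻¹ ∈ S.pos := by
      rwa [S.mul_inv_DL_conj_swap]
    obtain ⟨m, hm⟩ := ih u ⟨S.mul_inv_DL_le v x, hu_ne⟩ hu_conj
    exact ⟨m + 1, hm⟩

end GarsideStructure

/-- if `x` is conjugate to a positive element, then some iterated swap
of `x` is positive. -/
theorem garside_swap_reaches_positive {G : Type*} [Group G]
    (S : GarsideStructure G) (x : G) (h : ∃ y ∈ S.pos, IsConj x y) :
    ∃ m : ℕ, S.swap^[m] x ∈ S.pos := by
  obtain ⟨y, hy, hxy⟩ := h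
  obtain ⟨v, hv, hvx⟩ := S.exists_mem_pos_conj_mem_pos hy hxy
  exact S.exists_iterate_swap_mem_pos_of_conj_mem_pos hv hvx
end

section
/- Let (G, G⁺, Δ) be a Garside structure. Let y, z ∈ G and u ∈ G⁺ with u⁻¹yu = z, and let y = a⁻¹b and z = c⁻¹d be the reduced left-fraction decompositions. Then the transport u^{(1)} = au ∧ bu satisfies u^{(1)} = auc⁻¹ = bud⁻¹ ∈ G⁺, and (u^{(1)})⁻¹ φ(y) u^{(1)} = φ(z). -/
open scoped Pointwise Classical

/-!
If `y = a⁻¹ * b`, `z = c⁻¹ * d` and `u⁻¹ * y * u = z`, then `g = a * u * c⁻¹` satisfies both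
`g * c = a * u` and `g * d = b * u`. Left translations preserve meets, so
`a * u ⊓ b * u = g * (c ⊓ d)`, which is `g` as soon as `c ⊓ d = 1`.
-/

section Group

variable {G : Type*} [Group G] {a b c d u : G}

theorem mul_inv_mul_eq_of_conj_leftFraction (h : u⁻¹ * (a⁻¹ * b) * u = c⁻¹ * d) :
    a * u * c⁻¹ * d = b * u := by
  rw [mul_assoc, ← h]
  group

theorem mul_inv_eq_mul_inv_of_conj_leftFraction (h : u⁻¹ * (a⁻¹ * b) * u = c⁻¹ * d) :
    a * u * c⁻¹ = b * u * d⁻¹ :=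
  eq_mul_inv_of_mul_eq (mul_inv_mul_eq_of_conj_leftFraction h)

theorem conj_mul_inv_of_conj_leftFraction (h : u⁻¹ * (a⁻¹ * b) * u = c⁻¹ * d) :
    (a * u * c⁻¹)⁻¹ * (b * a⁻¹) * (a * u * c⁻¹) = d * c⁻¹ :=
  calc (a * u * c⁻¹)⁻¹ * (b * a⁻¹) * (a * u * c⁻¹)
      = c * (u⁻¹ * (a⁻¹ * b) * u) * c⁻¹ := by group
    _ = d * c⁻¹ := by rw [h, mul_inv_cancel_left]

end Group

/-- `x = a⁻¹ * b` is the reduced left-fraction decomposition of `x`, for a meet-semilattice order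
on `G`. When the order is left invariant, the positive elements are those above `1`, so positivity
of `a` and `b` follows from `a ⊓ b = 1` and is not a separate field. -/
structure IsReducedLeftFraction {G : Type*} [Group G] [SemilatticeInf G] (x a b : G) : Prop where
  eq_inv_mul : x = a⁻¹ * b
  inf_eq_one : a ⊓ b = 1

namespace IsReducedLeftFraction

variable {G : Type*} [Group G] [SemilatticeInf G] {x a b c d u : G}

theorem one_le_denom (h : IsReducedLeftFraction x a b) : 1 ≤ a :=
  h.inf_eq_one.ge.trans inf_le_left

theorem one_le_num (h : IsReducedLeftFraction x a b) : 1 ≤ b :=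
  h.inf_eq_one.ge.trans inf_le_right

variable [MulLeftMono G]

theorem one_inf (x : G) : IsReducedLeftFraction x (1 ⊓ x)⁻¹ ((1 ⊓ x)⁻¹ * x) where
  eq_inv_mul := by rw [inv_inv, mul_inv_cancel_left]
  inf_eq_one :=
    calc (1 ⊓ x)⁻¹ ⊓ (1 ⊓ x)⁻¹ * x
        = (1 ⊓ x)⁻¹ * 1 ⊓ (1 ⊓ x)⁻¹ * x := by rw [mul_one]
      _ = (1 ⊓ x)⁻¹ * (1 ⊓ x) := ((OrderIso.mulLeft (1 ⊓ x)⁻¹).map_inf 1 x).symm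
      _ = 1 := inv_mul_cancel _

theorem mul_inf_mul_eq_of_conj (h : IsReducedLeftFraction x c d)
    (hconj : u⁻¹ * (a⁻¹ * b) * u = x) : a * u ⊓ b * u = a * u * c⁻¹ :=
  calc a * u ⊓ b * u
      = a * u * c⁻¹ * c ⊓ a * u * c⁻¹ * d := by
        rw [inv_mul_cancel_right,
          mul_inv_mul_eq_of_conj_leftFraction (hconj.trans h.eq_inv_mul)]
    _ = a * u * c⁻¹ * (c ⊓ d) := ((OrderIso.mulLeft (a * u * c⁻¹)).map_inf c d).symm
    _ = a * u * c⁻¹ := by rw [h.inf_eq_one, mul_one]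

end IsReducedLeftFraction

theorem garside_transport_basic_general {G : Type*} [Group G] [SemilatticeInf G] [MulLeftMono G]
    {y z u a b c d : G} (hy : IsReducedLeftFraction y a b) (hz : IsReducedLeftFraction z c d)
    (hconj : u⁻¹ * y * u = z) :
    (1 ≤ u → 1 ≤ a * u ⊓ b * u) ∧
    a * u ⊓ b * u = a * u * c⁻¹ ∧
    a * u ⊓ b * u = b * u * d⁻¹ ∧
    (a * u ⊓ b * u)⁻¹ * (b * a⁻¹) * (a * u ⊓ b * u) = d * c⁻¹ := by
  rw [hy.eq_inv_mul] at hconj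
  have transport_eq : a * u ⊓ b * u = a * u * c⁻¹ := hz.mul_inf_mul_eq_of_conj hconj
  rw [hz.eq_inv_mul] at hconj
  refine ⟨fun hu ↦ le_inf (one_le_mul hy.one_le_denom hu) (one_le_mul hy.one_le_num hu),
    transport_eq, transport_eq.trans (mul_inv_eq_mul_inv_of_conj_leftFraction hconj), ?_⟩
  rw [transport_eq]
  exact conj_mul_inv_of_conj_leftFraction hconj

namespace GarsideStructure

variable {G : Type*} [Group G] (S : GarsideStructure G)

/-- The prefix order of a Garside structure as a meet-semilattice. Since it
depends on `S`, it is not an instance. -/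
abbrev prefixSemilatticeInf : SemilatticeInf G where
  le := S.le
  le_refl a := by simp [le]
  le_trans a b c hab hbc := by simpa [le, mul_assoc] using mul_mem hab hbc
  le_antisymm a b hab hba := inv_mul_eq_one.mp (S.units_triv _ hab (by simpa [le] using hba))
  inf := S.meet
  inf_le_left := S.meet_le_left
  inf_le_right := S.meet_le_right
  le_inf c a b := S.le_meet a b c

theorem mulLeftMono_prefix : letI := S.prefixSemilatticeInf; MulLeftMono G :=
  letI := S.prefixSemilatticeInf
  ⟨fun g a b (hab : a⁻¹ * b ∈ S.pos) ↦
    show (g * a)⁻¹ * (g * b) ∈ S.pos by simpa [mul_assoc] using hab⟩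

theorem isReducedLeftFraction_DL_NL (x : G) :
    letI := S.prefixSemilatticeInf; IsReducedLeftFraction x (S.DL x) (S.NL x) :=
  letI := S.prefixSemilatticeInf
  haveI := S.mulLeftMono_prefix
  .one_inf x

theorem one_le_iff_mem_pos_s9 {x : G} : S.le 1 x ↔ x ∈ S.pos := by
  rw [le, inv_one, one_mul]

end GarsideStructure

/-- definition and basic properties of the transport. If `u` is positive,
`u⁻¹ y u = z`, and `y = a⁻¹b`, `z = c⁻¹d` are the reduced left-fraction decompositions,
then `u⁽¹⁾ = au ∧ bu` is positive, equals `auc⁻¹ = bud⁻¹`, and conjugates `φ(y)` to `φ(z)`. -/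
theorem garside_transport_basic {G : Type*} [Group G]
    (S : GarsideStructure G) (y z u : G) (hu : u ∈ S.pos)
    (hconj : u⁻¹ * y * u = z) :
    S.transport y u ∈ S.pos ∧
    S.transport y u = S.DL y * u * (S.DL z)⁻¹ ∧
    S.transport y u = S.NL y * u * (S.NL z)⁻¹ ∧
    (S.transport y u)⁻¹ * S.swap y * S.transport y u = S.swap z := by
  let := S.prefixSemilatticeInf
  have := S.mulLeftMono_prefix
  obtain ⟨one_le_transport, transport_props⟩ :=
    garside_transport_basic_general (S.isReducedLeftFraction_DL_NL y)
      (S.isReducedLeftFraction_DL_NL z) hconj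
  exact ⟨S.one_le_iff_mem_pos_s9.mp (one_le_transport (S.one_le_iff_mem_pos_s9.mpr hu)), transport_props⟩
end

section
/- Let (G, G⁺, Δ) be a Garside structure, let y ∈ G have reduced left-fraction decomposition y = a⁻¹b, and for w ∈ G⁺ let w^{(1)} = aw ∧ bw be its transport at y. Then: (1) (Δ^m)^{(1)} = Δ^m for every integer m ≥ 0; (2) (u ∧ v)^{(1)} = u^{(1)} ∧ v^{(1)} for all u, v ∈ G⁺; (3) if u, v ∈ G⁺ and u ≼ v, then u^{(1)} ≼ v^{(1)}. -/
open scoped Pointwise Classical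

/-!
Left multiplication by any `c` preserves the prefix order, so `c * (u ∧ v) = c * u ∧ c * v`, and
transport at `y` is a meet of two automorphisms of the lattice `G`: hence it preserves meets and is
monotone.

Right multiplication by `g` preserves the prefix order when `g` normalizes the positive monoid, so
transport commutes with it; since transport at `y = a⁻¹b` sends `1` to `a ∧ b = 1`, it fixes every
such `g`, in particular every power of `Δ`.
-/

namespace GarsideStructure

variable {G : Type*} [Group G] (S : GarsideStructure G)

/-- The prefix order as a Mathlib lattice. It depends on `S`, so it is not an instance and is
introduced locally. -/
abbrev prefixLattice : Lattice G where
  le := S.le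
  le_refl a := by simp only [le, inv_mul_cancel, one_mem]
  le_trans a b c hab hbc := by
    simpa only [le, mul_assoc, mul_inv_cancel_left] using mul_mem hab hbc
  le_antisymm a b hab hba :=
    inv_mul_eq_one.mp (S.units_triv _ hab (by simpa only [le, mul_inv_rev, inv_inv] using hba))
  inf := S.meet
  inf_le_left := S.meet_le_left
  inf_le_right := S.meet_le_right
  le_inf c a b := S.le_meet a b c
  sup := S.join
  le_sup_left := S.le_join_left
  le_sup_right := S.le_join_right
  sup_le := S.join_le

theorem mulLeftMono_prefixLattice :
    letI := S.prefixLattice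
    MulLeftMono G :=
  let := S.prefixLattice
  ⟨fun c a b hab ↦ show (c * a)⁻¹ * (c * b) ∈ S.pos by
    rwa [mul_inv_rev, mul_assoc, inv_mul_cancel_left]⟩

theorem mul_meet (c u v : G) : c * S.meet u v = S.meet (c * u) (c * v) :=
  let := S.prefixLattice
  have := S.mulLeftMono_prefixLattice
  mul_inf u v c

theorem mul_le_mul_right_iff_of_mem_normalizer {g : G}
    (hg : g ∈ Subgroup.normalizer (S.pos : Set G)) (u v : G) : S.le (u * g) (v * g) ↔ S.le u v := by
  have conj : (u * g)⁻¹ * (v * g) = g⁻¹ * (u⁻¹ * v) * g := by group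
  rw [le, conj]
  exact (Subgroup.mem_set_normalizer_iff''.mp hg (u⁻¹ * v)).symm

theorem meet_mul_of_mem_normalizer {g : G}
    (hg : g ∈ Subgroup.normalizer (S.pos : Set G)) (u v : G) :
    S.meet u v * g = S.meet (u * g) (v * g) :=
  let := S.prefixLattice
  let mulRightIso : G ≃o G :=
    { Equiv.mulRight g with map_rel_iff' := S.mul_le_mul_right_iff_of_mem_normalizer hg _ _ }
  mulRightIso.map_inf u v

theorem meet_DL_NL (y : G) : S.meet (S.DL y) (S.NL y) = 1 :=
  calc S.meet (S.DL y) (S.NL y)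
    _ = S.DL y * S.meet 1 y := by rw [mul_meet, mul_one, NL]
    _ = 1 := inv_mul_cancel (S.meet 1 y)

theorem transport_one (y : G) : S.transport y 1 = 1 := by
  rw [transport, mul_one, mul_one, meet_DL_NL]

theorem transport_mul_of_mem_normalizer {g : G}
    (hg : g ∈ Subgroup.normalizer (S.pos : Set G)) (y u : G) :
    S.transport y (u * g) = S.transport y u * g := by
  simp only [transport, S.meet_mul_of_mem_normalizer hg, mul_assoc]

theorem transport_eq_self_of_mem_normalizer {g : G}
    (hg : g ∈ Subgroup.normalizer (S.pos : Set G)) (y : G) :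
    S.transport y g = g := by
  simpa only [one_mul, transport_one] using S.transport_mul_of_mem_normalizer hg y 1

theorem delta_mem_normalizer_pos : S.delta ∈ Subgroup.normalizer (S.pos : Set G) :=
  S.conj_delta

theorem transport_meet (y u v : G) :
    S.transport y (S.meet u v) = S.meet (S.transport y u) (S.transport y v) := by
  let := S.prefixLattice
  simp only [transport, mul_meet]
  exact inf_inf_inf_comm ..

theorem transport_mono (y : G) {u v : G} (huv : S.le u v) :
    S.le (S.transport y u) (S.transport y v) :=
  let := S.prefixLattice
  have := S.mulLeftMono_prefixLattice
  inf_le_inf (mul_le_mul_right huv (S.DL y)) (mul_le_mul_right huv (S.NL y))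

end GarsideStructure

theorem garside_transport_properties_general {G : Type*} [Group G]
    (S : GarsideStructure G) (y : G) :
    (∀ m : ℤ, S.transport y (S.delta ^ m) = S.delta ^ m) ∧
    (∀ u v : G, S.transport y (S.meet u v) = S.meet (S.transport y u) (S.transport y v)) ∧
    (∀ u v : G, S.le u v → S.le (S.transport y u) (S.transport y v)) :=
  ⟨fun m ↦ S.transport_eq_self_of_mem_normalizer (zpow_mem S.delta_mem_normalizer_pos m) y,
    S.transport_meet y, fun _ _ ↦ S.transport_mono y⟩

/-- properties of the transport at a fixed element `y`:
transport fixes nonnegative powers of `Δ`, commutes with meets of positive elements,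
and is monotone for the prefix order on positive elements. -/
theorem garside_transport_properties {G : Type*} [Group G]
    (S : GarsideStructure G) (y : G) :
    (∀ m : ℕ, S.transport y (S.delta ^ m) = S.delta ^ m) ∧
    (∀ u v : G, u ∈ S.pos → v ∈ S.pos →
      S.transport y (S.meet u v) = S.meet (S.transport y u) (S.transport y v)) ∧
    (∀ u v : G, u ∈ S.pos → v ∈ S.pos → S.le u v →
      S.le (S.transport y u) (S.transport y v)) := by
  obtain ⟨fixes_delta, preserves_meet, mono⟩ := garside_transport_properties_general S y
  exact ⟨fun m ↦ mod_cast fixes_delta m, fun u v _ _ ↦ preserves_meet u v, fun u v _ _ ↦ mono u v⟩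
end
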